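/- Ramis–Sibuya theorem for asymptotics with respect to a germ (Theorem 7.17): Let d ≥ 1, s > 0, r > 0, and P holomorphic on D(0;r) with P(0) = 0 and P not identically zero. Suppose the P-sectors Π_j = Π_P(a_j,b_j;r), 1 ≤ j ≤ m, cover the set {x ∈ D(0;r) : P(x) ≠ 0 and x_i ≠ 0 for all i}, and let f_j : Π_j → ℂ be bounded holomorphic functions such that there exist constants γ, C > 0 with |f_{j_1}(x) − f_{j_2}(x)| ≤ C·exp(−γ/|P(x)|^{1/s}) for all j_1, j_2 ∈ {1,…,m} and all x ∈ Π_{j_1} ∩ Π_{j_2}. Then there exist ρ > 0, a sequence (g_n) of bounded holomorphic functions on D(0;ρ), and constants K, A > 0 such that sup_{D(0;ρ)}|g_n| ≤ K·A^n·Γ(sn+1) for every n and, for every j ∈ {1,…,m}, every N ∈ ℕ, and every x ∈ Π_j ∩ D(0;ρ), |f_j(x) − Σ_{n<N} g_n(x)·P(x)^n| ≤ K·A^N·Γ(sN+1)·|P(x)|^N; in particular all f_j have a common P-s-Gevrey asymptotic expansion. -/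

import Mathlib

open Set Complex

noncomputable section

/-- Open polydisk of radius `r` centered at `0` in `ℂ^d`. -/
def polydisk (d : ℕ) (r : ℝ) : Set (Fin d → ℂ) :=
  {x | ∀ j, ‖x j‖ < r}

/-- The `P`-sector `Π_P(a,b;r)`. -/
def PSector (d : ℕ) (P : (Fin d → ℂ) → ℂ) (a b r : ℝ) : Set (Fin d → ℂ) :=
  {x | (∀ j, 0 < ‖x j‖ ∧ ‖x j‖ < r) ∧ P x ≠ 0 ∧
    ∃ θ ∈ Set.Ioo a b, P x = (‖P x‖ : ℂ) * Complex.exp (θ * Complex.I)}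

namespace RS
open MeasureTheory Metric Topology Filter

lemma cons_mem {n : ℕ} {c : Fin (n+1) → ℂ} {R : ℝ} (hR : 0 ≤ R) {x : ℂ} {y : Fin n → ℂ}
    (hx : x ∈ closedBall (c 0) R) (hy : y ∈ closedBall (c ∘ Fin.succ) R) :
    (Fin.cons x y : Fin (n+1) → ℂ) ∈ closedBall c R := by
  rw [mem_closedBall, dist_pi_le_iff hR] at *
  intro i
  refine Fin.cases ?_ (fun j => ?_) i
  · simpa using hx
  · simpa using hy j

lemma differentiable_cons {n : ℕ} :
    Differentiable ℂ (fun p : ℂ × (Fin n → ℂ) => (Fin.cons p.1 p.2 : Fin (n+1) → ℂ)) := by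
  rw [differentiable_pi]
  intro i
  refine Fin.cases ?_ (fun j => ?_) i
  · simp only [Fin.cons_zero]; fun_prop
  · simp only [Fin.cons_succ]; fun_prop

lemma torusMap_mem {n : ℕ} {c : Fin n → ℂ} {R : ℝ} (hR : 0 ≤ R) (θ : Fin n → ℝ) :
    torusMap c (fun _ => R) θ ∈ closedBall c R := by
  rw [mem_closedBall, dist_pi_le_iff hR]
  intro i
  simp [torusMap, dist_eq_norm, abs_of_nonneg hR, Complex.norm_exp_ofReal_mul_I]

lemma continuous_torusMap {n : ℕ} (c : Fin n → ℂ) (R : ℝ) :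
    Continuous (torusMap c (fun _ => R)) := by
  unfold torusMap; fun_prop

lemma torus_sub_ne {n : ℕ} {c w : Fin n → ℂ} {R : ℝ} (hw : w ∈ ball c R)
    (θ : Fin n → ℝ) (i : Fin n) : torusMap c (fun _ => R) θ i - w i ≠ 0 := by
  intro h
  have hR : 0 < R := pos_of_mem_ball hw
  have h1 : dist (w i) (c i) < R := lt_of_le_of_lt (dist_le_pi_dist _ _ _) hw
  rw [sub_eq_zero] at h
  rw [← h, dist_eq_norm] at h1
  simp [torusMap, abs_of_pos hR, Complex.norm_exp_ofReal_mul_I] at h1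

lemma torus_cauchy (n : ℕ) : ∀ (f : (Fin n → ℂ) → ℂ) (c w : Fin n → ℂ) (R : ℝ),
    0 < R → DifferentiableOn ℂ f (closedBall c R) → w ∈ ball c R →
    (∯ z in T(c, fun _ => R), (∏ i, (z i - w i)⁻¹) * f z) = (2 * Real.pi * I) ^ n * f w := by
  induction n with
  | zero =>
    intro f c w R hR hf hw
    rw [torusIntegral_dim0]
    simp [Subsingleton.elim w c]
  | succ n ih =>
    intro f c w R hR hf hw
    have hint : TorusIntegrable (fun z => (∏ i, (z i - w i)⁻¹) * f z) c (fun _ => R) := by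
      unfold TorusIntegrable
      apply Continuous.integrableOn_Icc
      refine Continuous.mul ?_ ?_
      · refine continuous_finsetProd _ (fun i _ => ?_)
        refine Continuous.inv₀ ?_ (fun θ => torus_sub_ne hw θ i)
        exact ((continuous_apply i).comp (continuous_torusMap c R)).sub continuous_const
      · exact hf.continuousOn.comp_continuous (continuous_torusMap c R)
          (fun θ => torusMap_mem hR.le θ)
    rw [torusIntegral_succ hint]
    have hw0 : w 0 ∈ ball (c 0) R := lt_of_le_of_lt (dist_le_pi_dist _ _ _) hw
    have hw1 : (w ∘ Fin.succ) ∈ ball (c ∘ Fin.succ) R := by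
      rw [mem_ball, dist_pi_lt_iff hR]
      intro i
      exact lt_of_le_of_lt (dist_le_pi_dist w c i.succ) hw
    have h1 : ∀ x ∈ sphere (c 0) R,
        (∯ y in T(c ∘ Fin.succ, (fun _ => R) ∘ Fin.succ),
          (∏ i, ((Fin.cons x y : Fin (n+1) → ℂ) i - w i)⁻¹) * f (Fin.cons x y))
        = (x - w 0)⁻¹ • ((2 * Real.pi * I) ^ n * f (Fin.cons x (w ∘ Fin.succ))) := by
      intro x hx
      have h2 := ih (fun y => f (Fin.cons x y)) (c ∘ Fin.succ) (w ∘ Fin.succ) R hR ?_ hw1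
      · rw [← h2, smul_eq_mul, ← torusIntegral_const_mul]
        simp only [Fin.prod_univ_succ, Fin.cons_zero, Fin.cons_succ, mul_assoc]
        rfl
      · refine hf.comp (t := closedBall c R) ?_ ?_
        · exact (differentiable_cons.comp
            (differentiable_const x |>.prodMk differentiable_id)).differentiableOn
        · intro y hy
          exact cons_mem hR.le (sphere_subset_closedBall hx) hy
    rw [circleIntegral.integral_congr hR.le h1]
    have h3 : DifferentiableOn ℂ
        (fun x => (2 * Real.pi * I) ^ n * f (Fin.cons x (w ∘ Fin.succ))) (closedBall (c 0) R) := by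
      refine DifferentiableOn.const_mul ?_ _
      refine hf.comp (t := closedBall c R) ?_ ?_
      · exact (differentiable_cons.comp
            (differentiable_id.prodMk (differentiable_const (w ∘ Fin.succ)))).differentiableOn
      · intro x hx
        exact cons_mem hR.le hx (ball_subset_closedBall hw1)
    rw [h3.circleIntegral_sub_inv_smul hw0]
    have : (Fin.cons (w 0) (w ∘ Fin.succ) : Fin (n+1) → ℂ) = w := by
      ext i; refine Fin.cases ?_ (fun j => ?_) i <;> simp
    rw [this, smul_eq_mul]; ring

/-- integration against a continuous density on a compact set, as a CLM on `C(K,ℂ)`. -/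
lemma exists_intCLM {n : ℕ} (m : (Fin n → ℝ) → ℂ) (hm : Continuous m) :
    ∃ L : C(Icc (0 : Fin n → ℝ) (fun _ => 2 * Real.pi), ℂ) →L[ℂ] ℂ,
      ∀ (g : C(Icc (0 : Fin n → ℝ) (fun _ => 2 * Real.pi), ℂ)) (G : (Fin n → ℝ) → ℂ),
        (∀ θ : Icc (0 : Fin n → ℝ) (fun _ => 2 * Real.pi), G θ = g θ) → L g = ∫ θ in Icc (0 : Fin n → ℝ) (fun _ => 2 * Real.pi), m θ * G θ := by
  let K := Icc (0 : Fin n → ℝ) (fun _ => 2 * Real.pi)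
  let μ : Measure K := Measure.comap Subtype.val volume
  have : IsFiniteMeasure μ := by
    constructor
    rw [Measure.comap_apply₀ (μ := volume)]
    · simp only [image_univ, Subtype.range_coe_subtype, ofPred_mem_eq]
      exact measure_Icc_lt_top
    · exact Subtype.val_injective
    · intro s hs
      exact (measurableSet_Icc.subtype_image hs).nullMeasurableSet
    · exact MeasurableSet.univ.nullMeasurableSet
  have hint : ∀ g : C(K, ℂ), Integrable (fun θ : K => m θ * g θ) μ := by
    intro g
    exact ((hm.comp continuous_subtype_val).mul g.continuous).integrable_of_hasCompactSupport
      (HasCompactSupport.of_compactSpace _)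
  obtain ⟨B, hB⟩ := (isCompact_Icc (a := (0 : Fin n → ℝ)) (b := fun _ => 2 * Real.pi)).exists_bound_of_continuousOn hm.continuousOn
  let L0 : C(K, ℂ) →ₗ[ℂ] ℂ :=
    { toFun := fun g => ∫ θ : K, m θ * g θ ∂μ
      map_add' := fun g h => by
        rw [← integral_add (hint g) (hint h)]
        congr 1; ext θ; simp [mul_add]
      map_smul' := fun a g => by
        simp only [ContinuousMap.coe_smul, Pi.smul_apply, smul_eq_mul, RingHom.id_apply]
        rw [← integral_const_mul]; congr 1; ext θ; ring }
  refine ⟨L0.mkContinuous (B * (μ univ).toReal) ?_, ?_⟩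
  · intro g
    have := norm_integral_le_of_norm_le_const (μ := μ) (f := fun θ : K => m θ * g θ)
      (C := B * ‖g‖) (Eventually.of_forall (fun θ => by
        rw [norm_mul]
        exact mul_le_mul (hB _ θ.2) (g.norm_coe_le_norm θ) (norm_nonneg _)
          ((norm_nonneg _).trans (hB _ θ.2))))
    calc ‖L0 g‖ ≤ _ := this
      _ = _ := by simp only [Measure.real]; ring
  · intro g G hG
    rw [LinearMap.mkContinuous_apply]
    change ∫ θ : K, m θ * g θ ∂μ = _
    rw [← integral_subtype_comap measurableSet_Icc (fun θ => m θ * G θ)]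
    refine integral_congr_ae (Eventually.of_forall (fun θ => ?_))
    simp [hG]

theorem osgood {n : ℕ} {U : Set (Fin n → ℂ)} (hU : IsOpen U) {f : (Fin n → ℂ) → ℂ}
    (hf : DifferentiableOn ℂ f U) : AnalyticOnNhd ℂ f U := by
  intro c hc
  obtain ⟨R, hR, hRU⟩ := nhds_basis_closedBall.mem_iff.1 (hU.mem_nhds hc)
  have hf' := hf.mono hRU
  let K := Icc (0 : Fin n → ℝ) (fun _ => 2 * Real.pi)
  let κ : Fin n → (Fin n → ℂ) → C(K, ℂ) := fun i w =>
    (⟨fun θ : K => torusMap c (fun _ => R) θ i,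
      (continuous_apply i).comp ((continuous_torusMap c R).comp continuous_subtype_val)⟩ : C(K,ℂ))
      - algebraMap ℂ C(K, ℂ) (w i)
  have hκ : ∀ i w, AnalyticAt ℂ (κ i) w := by
    intro i w
    refine analyticAt_const.sub ?_
    exact ((algebraMapCLM ℂ C(K,ℂ)).comp (ContinuousLinearMap.proj (R := ℂ) (φ := fun _ : Fin n => ℂ) i)).analyticAt w
  have hinv : ∀ w ∈ ball c R, ∀ i, ∃ u : C(K, ℂ)ˣ, (u : C(K,ℂ)) = κ i w ∧
      ∀ θ : K, (↑u⁻¹ : C(K, ℂ)) θ = (torusMap c (fun _ => R) θ i - w i)⁻¹ := by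
    intro w hw i
    refine ⟨⟨κ i w, ⟨fun θ => (torusMap c (fun _ => R) θ i - w i)⁻¹, ?_⟩, ?_, ?_⟩, rfl, fun θ => rfl⟩
    · refine Continuous.inv₀ ?_ (fun θ => torus_sub_ne hw θ i)
      exact ((continuous_apply i).comp ((continuous_torusMap c R).comp
        continuous_subtype_val)).sub continuous_const
    · ext θ
      exact mul_inv_cancel₀ (torus_sub_ne hw θ i)
    · ext θ
      exact inv_mul_cancel₀ (torus_sub_ne hw θ i)
  obtain ⟨L, hL⟩ := exists_intCLM (n := n)
    (fun θ => (∏ i, (R : ℂ) * exp (θ i * I) * I) * f (torusMap c (fun _ => R) θ)) (by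
      refine Continuous.mul (by fun_prop) ?_
      exact hf'.continuousOn.comp_continuous (continuous_torusMap c R)
          (fun θ => torusMap_mem hR.le θ))
  have hA : AnalyticAt ℂ (fun w => ((2 * Real.pi * I) ^ n : ℂ)⁻¹ *
      L (∏ i, Ring.inverse (κ i w))) c := by
    refine analyticAt_const.mul ?_
    refine (L.analyticAt _).comp ?_
    refine Finset.analyticAt_fun_prod _ (fun i _ => ?_)
    obtain ⟨u, hu, -⟩ := hinv c (mem_ball_self hR) i
    refine AnalyticAt.fun_comp ?_ (hκ i c)
    rw [← hu]
    exact analyticAt_inverse u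
  refine hA.congr ?_
  filter_upwards [ball_mem_nhds c hR] with w hw
  have h1 := torus_cauchy n f c w R hR hf' hw
  have h2 : L (∏ i, Ring.inverse (κ i w)) = ∯ z in T(c, fun _ => R), (∏ i, (z i - w i)⁻¹) * f z := by
    rw [hL _ (fun θ => ∏ i, (torusMap c (fun _ => R) θ i - w i)⁻¹)]
    · unfold torusIntegral
      congr 1; ext θ; rw [smul_eq_mul]; ring
    · intro θ
      rw [ContinuousMap.coe_prod, Finset.prod_apply]
      refine Finset.prod_congr rfl (fun i _ => ?_)
      obtain ⟨u, hu, hu'⟩ := hinv w hw i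
      rw [← hu, Ring.inverse_unit, hu']
  rw [h2, h1, ← mul_assoc, inv_mul_cancel₀, one_mul]
  apply pow_ne_zero
  simp [Real.pi_ne_zero]

end RS

namespace RS
open MeasureTheory Metric Topology Filter

lemma line_nonzero {E : Type*} [NormedAddCommGroup E] [NormedSpace ℂ E] {Q : E → ℂ} {p y : E}
    {R : ℝ} (hQ : AnalyticOnNhd ℂ Q (ball p R)) (hy : y ∈ ball p R) (hQy : Q y ≠ 0) :
    ∀ᶠ t in 𝓝[≠] (0:ℂ), Q (p + t • (y - p)) ≠ 0 := by
  have hR : 0 < R := pos_of_mem_ball hy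
  let S : Set ℂ := {t | p + t • (y - p) ∈ ball p R}
  have hS : S = (fun t : ℂ => t • (y - p)) ⁻¹' ball 0 R := by
    ext t; simp [S]
  have hconv : Convex ℝ S := by
    rw [hS]
    exact (convex_ball (0:E) R).is_linear_preimage
      ⟨fun a b => add_smul a b _, fun a b => by simp [mul_smul]⟩
  have hq : AnalyticOnNhd ℂ (fun t : ℂ => Q (p + t • (y - p))) S := by
    intro t ht
    refine AnalyticAt.comp (g := Q) (f := fun t : ℂ => p + t • (y - p)) (hQ _ ht) ?_
    exact analyticAt_const.add (analyticAt_id.smul analyticAt_const)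
  have h0 : (0:ℂ) ∈ S := by simp [S, hR]
  have h1 : (1:ℂ) ∈ S := by simpa [S, dist_eq_norm] using hy
  rcases (hq 0 h0).eventually_eq_zero_or_eventually_ne_zero with h | h
  · exfalso
    have := hq.eqOn_zero_of_preconnected_of_eventuallyEq_zero hconv.isPreconnected h0 h h1
    simp at this
    exact hQy this
  · exact h

lemma removable_disc {q g : ℂ → ℂ} {δ δ' M : ℝ} (hδ : 0 < δ) (hδ' : δ < δ')
    (hq : AnalyticOnNhd ℂ q (ball 0 δ')) (hqs : ∀ t ∈ sphere (0:ℂ) δ, q t ≠ 0)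
    (hq0 : q 0 ≠ 0) (hg : ∀ t ∈ ball (0:ℂ) δ', q t ≠ 0 → DifferentiableAt ℂ g t)
    (hM : ∀ t ∈ ball (0:ℂ) δ', q t ≠ 0 → ‖g t‖ ≤ M) :
    Real.circleAverage g 0 δ = g 0 := by
  let G : ℂ → ℂ := fun t => limUnder (𝓝[≠] t) g
  have h00 : (0:ℂ) ∈ ball (0:ℂ) δ' := mem_ball_self (hδ.trans hδ')
  have hGg : ∀ t ∈ ball (0:ℂ) δ', q t ≠ 0 → G t = g t := fun t ht hqt =>
    ((hg t ht hqt).continuousAt.tendsto.mono_left nhdsWithin_le_nhds).limUnder_eq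
  have hGd : ∀ t ∈ ball (0:ℂ) δ', DifferentiableAt ℂ G t := by
    intro t ht
    have h1 : ∀ᶠ z in 𝓝[≠] t, q z ≠ 0 := by
      rcases (hq t ht).eventually_eq_zero_or_eventually_ne_zero with h | h
      · exact absurd (hq.eqOn_zero_of_preconnected_of_eventuallyEq_zero
          (convex_ball (0:ℂ) δ').isPreconnected ht h h00) hq0
      · exact h
    rw [eventually_nhdsWithin_iff] at h1
    obtain ⟨s, hs, hs1⟩ := Metric.eventually_nhds_iff_ball.1 (h1.and (isOpen_ball.mem_nhds ht))
    have h2 := Complex.differentiableOn_update_limUnder_of_bddAbove (f := g)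
      (isOpen_ball.mem_nhds (mem_ball_self hs) : ball t s ∈ 𝓝 t)
      (fun z hz => (hg z (hs1 z hz.1).2 ((hs1 z hz.1).1 hz.2)).differentiableWithinAt)
      ⟨M, by
        rintro _ ⟨z, hz, rfl⟩
        exact hM z (hs1 z hz.1).2 ((hs1 z hz.1).1 hz.2)⟩
    refine ((h2 t (mem_ball_self hs)).differentiableAt (ball_mem_nhds t hs)).congr_of_eventuallyEq ?_
    filter_upwards [ball_mem_nhds t hs] with z hz
    by_cases hzt : z = t
    · subst hzt; simp [G]
    · rw [Function.update_of_ne hzt]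
      exact hGg z (hs1 z hz).2 ((hs1 z hz).1 hzt)
  have h3 : Real.circleAverage g 0 δ = Real.circleAverage G 0 δ := by
    apply Real.circleAverage_congr_sphere
    intro t ht
    rw [abs_of_pos hδ] at ht
    have : t ∈ ball (0:ℂ) δ' := by
      rw [mem_sphere] at ht; rw [mem_ball, ht]; exact hδ'
    exact (hGg t this (hqs t ht)).symm
  rw [h3, ← hGg 0 h00 hq0]
  apply DiffContOnCl.circleAverage
  rw [abs_of_pos hδ]
  apply DifferentiableOn.diffContOnCl
  intro t ht
  rw [closure_ball _ hδ.ne'] at ht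
  exact (hGd t (closedBall_subset_ball hδ' ht)).differentiableWithinAt

lemma differentiableAt_circleAverage {n : ℕ} {V : Set (Fin n → ℂ)} (hV : IsOpen V)
    {f : (Fin n → ℂ) → ℂ} (hf : AnalyticOnNhd ℂ f V) {x₀ v : Fin n → ℂ} {δ : ℝ} (hδ : 0 < δ)
    (hx : ∀ t ∈ sphere (0:ℂ) δ, x₀ + t • v ∈ V) :
    DifferentiableAt ℂ (fun x => Real.circleAverage (fun t => f (x + t • v)) 0 δ) x₀ := by
  have hK : IsCompact ((fun t : ℂ => x₀ + t • v) '' sphere (0:ℂ) δ) :=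
    (isCompact_sphere _ _).image (by fun_prop)
  obtain ⟨ε, hε, hεV⟩ := hK.exists_cthickening_subset_open hV (by
    rintro _ ⟨t, ht, rfl⟩; exact hx t ht)
  have hc := hK.cthickening (r := ε)
  have hfd : ContinuousOn (fderiv ℂ f) V := fun y hy =>
    ((hf y hy).fderiv.continuousAt).continuousWithinAt
  obtain ⟨B, hB⟩ := hc.exists_bound_of_continuousOn (hfd.mono hεV)
  have hcm : ∀ θ : ℝ, circleMap 0 δ θ ∈ sphere (0:ℂ) δ := fun θ => circleMap_mem_sphere _ hδ.le θ
  have hmem : ∀ x ∈ ball x₀ ε, ∀ θ : ℝ, x + circleMap 0 δ θ • v ∈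
      cthickening ε ((fun t : ℂ => x₀ + t • v) '' sphere (0:ℂ) δ) := by
    intro x hx θ
    refine mem_cthickening_of_dist_le _ (x₀ + circleMap 0 δ θ • v) _ _ ⟨_, hcm θ, rfl⟩ ?_
    simpa using (mem_ball.1 hx).le
  have hcont : ∀ x ∈ ball x₀ ε, Continuous (fun θ : ℝ => f (x + circleMap 0 δ θ • v)) := by
    intro x hx
    refine ContinuousOn.comp_continuous (s := V) (fun y hy => (hf y hy).continuousAt.continuousWithinAt)
      (by fun_prop) (fun θ => hεV (hmem x hx θ))
  unfold Real.circleAverage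
  refine DifferentiableAt.const_smul ?_ ((2 * Real.pi)⁻¹ : ℝ)
  refine (intervalIntegral.hasFDerivAt_integral_of_dominated_of_fderiv_le
    (F' := fun x θ => fderiv ℂ f (x + circleMap 0 δ θ • v)) (bound := fun _ => B)
    (ball_mem_nhds x₀ hε) ?_ ?_ ?_ ?_ ?_ ?_).differentiableAt
  · filter_upwards [ball_mem_nhds x₀ hε] with x hx
    exact (hcont x hx).aestronglyMeasurable
  · exact (hcont x₀ (mem_ball_self hε)).intervalIntegrable _ _
  · refine Continuous.aestronglyMeasurable ?_
    exact hfd.comp_continuous (by fun_prop) (fun θ => hεV (hmem x₀ (mem_ball_self hε) θ))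
  · exact Eventually.of_forall (fun θ _ x hx => hB _ (hmem x hx θ))
  · simp
  · refine Eventually.of_forall (fun θ _ x hx => ?_)
    have := (hf _ (hεV (hmem x hx θ))).differentiableAt.hasFDerivAt
    exact (hasFDerivAt_comp_add_right _).2 this

theorem riemann_ext {n : ℕ} {U : Set (Fin n → ℂ)} (hU : IsOpen U) {Q f : (Fin n → ℂ) → ℂ}
    (hQ : AnalyticOnNhd ℂ Q U) (hQne : ∀ p ∈ U, ¬ ∀ᶠ x in 𝓝 p, Q x = 0)
    (hf : AnalyticOnNhd ℂ f (U ∩ {x | Q x ≠ 0})) (M : ℝ)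
    (hM : ∀ x ∈ U, Q x ≠ 0 → ‖f x‖ ≤ M) :
    ∃ F : (Fin n → ℂ) → ℂ, AnalyticOnNhd ℂ F U ∧ (∀ x ∈ U, Q x ≠ 0 → F x = f x) ∧
      ∀ x ∈ U, ‖F x‖ ≤ M := by
  have hV : IsOpen (U ∩ {x | Q x ≠ 0}) := by
    have : ContinuousOn Q U := fun y hy => (hQ y hy).continuousAt.continuousWithinAt
    exact this.isOpen_inter_preimage hU isOpen_compl_singleton
  have hloc : ∀ p ∈ U, ∃ Fp : (Fin n → ℂ) → ℂ, ∀ᶠ x in 𝓝 p, DifferentiableAt ℂ Fp x ∧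
      (Q x ≠ 0 → Fp x = f x) := by
    intro p hp
    obtain ⟨R, hR, hRU⟩ := Metric.isOpen_iff.1 hU p hp
    obtain ⟨y, hyR, hQy⟩ : ∃ y ∈ ball p R, Q y ≠ 0 := by
      by_contra! h
      exact hQne p hp (by filter_upwards [ball_mem_nhds p hR] with x hx using h x hx)
    have h1 := line_nonzero (hQ.mono hRU) hyR hQy
    set v := y - p with hv
    have h2 : ∀ᶠ t in 𝓝 (0:ℂ), p + t • v ∈ ball p (R/2) := by
      have : ContinuousAt (fun t : ℂ => p + t • v) 0 := by fun_prop
      exact this.preimage_mem_nhds (by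
        have := ball_mem_nhds p (half_pos hR)
        simpa only [zero_smul, add_zero] using this)
    rw [eventually_nhdsWithin_iff] at h1
    obtain ⟨η, hη, hη1⟩ := Metric.eventually_nhds_iff_ball.1 (h1.and h2)
    have hK : IsCompact ((fun t : ℂ => p + t • v) '' sphere (0:ℂ) (η/2)) :=
      (isCompact_sphere _ _).image (by fun_prop)
    have hsph : ∀ t ∈ sphere (0:ℂ) (η/2), t ∈ ball (0:ℂ) η ∧ t ≠ 0 := by
      intro t ht
      rw [mem_sphere_zero_iff_norm] at ht
      refine ⟨by rw [mem_ball_zero_iff, ht]; linarith, ?_⟩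
      rintro rfl; simp at ht; linarith
    have hKV : (fun t : ℂ => p + t • v) '' sphere (0:ℂ) (η/2) ⊆ U ∩ {x | Q x ≠ 0} := by
      rintro _ ⟨t, ht, rfl⟩
      obtain ⟨ht1, ht2⟩ := hsph t ht
      exact ⟨hRU (ball_subset_ball (by linarith) (hη1 t ht1).2), (hη1 t ht1).1 ht2⟩
    obtain ⟨ε, hε, hεV⟩ := hK.exists_cthickening_subset_open hV hKV
    refine ⟨fun x => Real.circleAverage (fun t => f (x + t • v)) 0 (η/2), ?_⟩
    filter_upwards [ball_mem_nhds p hε, ball_mem_nhds p (half_pos hR)] with x hx hxR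
    have hxV : ∀ t ∈ sphere (0:ℂ) (η/2), x + t • v ∈ U ∩ {x | Q x ≠ 0} := by
      intro t ht
      refine hεV (mem_cthickening_of_dist_le _ (p + t • v) _ _ ⟨_, ht, rfl⟩ ?_)
      simpa using (mem_ball.1 hx).le
    have hxU : ∀ t ∈ ball (0:ℂ) η, x + t • v ∈ U := by
      intro t ht
      apply hRU
      have h3 := (hη1 t ht).2
      rw [mem_ball, dist_eq_norm] at *
      calc ‖x + t • v - p‖ = ‖(x - p) + (p + t • v - p)‖ := by congr 1; abel
        _ ≤ _ := norm_add_le _ _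
        _ < R := by linarith
    refine ⟨differentiableAt_circleAverage hV hf (half_pos hη) hxV, fun hQx => ?_⟩
    have haff : ∀ t : ℂ, AnalyticAt ℂ (fun t : ℂ => x + t • v) t := fun t =>
      analyticAt_const.add (analyticAt_id.smul analyticAt_const)
    have := removable_disc (q := fun t => Q (x + t • v)) (g := fun t => f (x + t • v))
      (half_pos hη) (half_lt_self hη) (M := M)
      (fun t ht => AnalyticAt.comp (g := Q) (f := fun t : ℂ => x + t • v) (hQ _ (hxU t ht)) (haff t))
      (fun t ht => (hxV t ht).2) (by simpa using hQx)
      (fun t ht hq => (AnalyticAt.comp (g := f) (f := fun t : ℂ => x + t • v) (hf _ ⟨hxU t ht, hq⟩) (haff t)).differentiableAt)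
      (fun t ht hq => hM _ (hxU t ht) hq)
    simpa using this
  -- density
  have hdense : ∀ p ∈ U, ∃ᶠ x in 𝓝 p, Q x ≠ 0 := fun p hp => by
    intro h; exact hQne p hp (h.mono (fun x hx => not_not.1 hx))
  have hne : ∀ p ∈ U, (𝓝[{x | Q x ≠ 0}] p).NeBot := fun p hp => by
    rw [← mem_closure_iff_nhdsWithin_neBot, mem_closure_iff_frequently]
    exact hdense p hp
  let F : (Fin n → ℂ) → ℂ := fun x => limUnder (𝓝[{x | Q x ≠ 0}] x) f
  have hF : ∀ p ∈ U, ∀ Fp : (Fin n → ℂ) → ℂ, ContinuousAt Fp p →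
      (∀ᶠ x in 𝓝 p, Q x ≠ 0 → Fp x = f x) → F p = Fp p := by
    intro p hp Fp hc he
    have := hne p hp
    refine Tendsto.limUnder_eq ?_
    refine (hc.tendsto.mono_left nhdsWithin_le_nhds).congr' ?_
    rw [EventuallyEq, eventually_nhdsWithin_iff]
    exact he
  have hFd : DifferentiableOn ℂ F U := by
    intro p hp
    obtain ⟨Fp, hFp⟩ := hloc p hp
    refine (hFp.self_of_nhds.1.congr_of_eventuallyEq ?_).differentiableWithinAt
    filter_upwards [hFp.eventually_nhds, hU.mem_nhds hp] with x hx hxU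
    exact hF x hxU Fp hx.self_of_nhds.1.continuousAt (hx.mono (fun _ h => h.2))
  have hFf : ∀ x ∈ U, Q x ≠ 0 → F x = f x := fun x hx hQx =>
    hF x hx f (hf x ⟨hx, hQx⟩).continuousAt (Eventually.of_forall (fun _ _ => rfl))
  refine ⟨F, osgood hU hFd, hFf, fun x hx => ?_⟩
  have := hne x hx
  have hc : ContinuousAt F x := (hFd.differentiableAt (hU.mem_nhds hx)).continuousAt
  refine le_of_tendsto (hc.norm.tendsto.mono_left (nhdsWithin_le_nhds (s := {x | Q x ≠ 0}))) ?_
  rw [eventually_nhdsWithin_iff]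
  filter_upwards [hU.mem_nhds hx] with y hy hQy
  rw [hFf y hy hQy]; exact hM y hy hQy

end RS

namespace RS
open MeasureTheory Metric Topology Filter

lemma rpow_exp_le_Gamma {a y : ℝ} (ha : 0 ≤ a) (hy : 0 < y) :
    y ^ a * Real.exp (-y) ≤ Real.Gamma (a + 1) := by
  rw [Real.Gamma_eq_integral (by linarith)]
  have hint := Real.GammaIntegral_convergent (s := a + 1) (by linarith)
  have h1 : ∫ x in Ioi y, Real.exp (-x) * y ^ a = y ^ a * Real.exp (-y) := by
    rw [integral_mul_const, integral_exp_neg_Ioi, mul_comm]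
  rw [← h1]
  calc ∫ x in Ioi y, Real.exp (-x) * y ^ a ≤ ∫ x in Ioi y, Real.exp (-x) * x ^ (a + 1 - 1) := by
        refine setIntegral_mono_on ?_ (hint.mono_set (Ioi_subset_Ioi hy.le)) measurableSet_Ioi ?_
        · exact (integrableOn_exp_neg_Ioi y).mul_const _
        · intro x hx
          rw [mem_Ioi] at hx
          rw [add_sub_cancel_right]
          gcongr
    _ ≤ _ := by
        refine setIntegral_mono_set hint ?_ (Ioi_subset_Ioi hy.le).eventuallyLE
        filter_upwards [ae_restrict_mem measurableSet_Ioi] with x hx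
        rw [mem_Ioi] at hx
        simp only [Pi.zero_apply]; positivity

lemma Gamma_add_le {s : ℝ} (hs : 0 < s) : ∃ C : ℝ, 0 < C ∧ ∀ a : ℝ, 1 ≤ a →
    Real.Gamma (a + s) ≤ C * 2 ^ a * Real.Gamma a := by
  refine ⟨2 ^ s * Real.Gamma (s + 1), by have := Real.Gamma_pos_of_pos (show 0 < s + 1 by linarith); positivity, fun a ha => ?_⟩
  have h1 := Real.integral_rpow_mul_exp_neg_mul_Ioi (a := a) (r := 1/2) (by linarith) (by norm_num)
  have hint := Real.GammaIntegral_convergent (s := a + s) (by linarith)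
  have hG : 0 < Real.Gamma a := Real.Gamma_pos_of_pos (by linarith)
  have hi2 : IntegrableOn (fun t : ℝ => t ^ (a - 1) * Real.exp (-(1/2 * t))) (Ioi 0) := by
    by_contra h
    rw [integral_undef h] at h1
    have : (0:ℝ) < (1 / (1/2)) ^ a * Real.Gamma a := by positivity
    linarith
  have h2 : (2:ℝ) ^ s * Real.Gamma (s + 1) * 2 ^ a * Real.Gamma a =
      ∫ t in Ioi (0:ℝ), (2:ℝ) ^ s * Real.Gamma (s + 1) * (t ^ (a - 1) * Real.exp (-(1/2 * t))) := by
    rw [integral_const_mul, h1]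
    norm_num
    ring
  rw [h2, Real.Gamma_eq_integral (by linarith)]
  refine setIntegral_mono_on hint (hi2.const_mul _) measurableSet_Ioi fun t ht => ?_
  rw [mem_Ioi] at ht
  have h3 := rpow_exp_le_Gamma hs.le (half_pos ht)
  rw [Real.div_rpow ht.le (by norm_num), div_mul_eq_mul_div, div_le_iff₀ (by positivity)] at h3
  have e1 : t ^ (a + s - 1) = t ^ s * t ^ (a - 1) := by
    rw [← Real.rpow_add ht]; congr 1; ring
  have e2 : Real.exp (-t) = Real.exp (-(t/2)) * Real.exp (-(1/2 * t)) := by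
    rw [← Real.exp_add]; congr 1; ring
  rw [e1, e2]
  calc _ = (t ^ s * Real.exp (-(t/2))) * (t ^ (a-1) * Real.exp (-(1/2*t))) := by ring
    _ ≤ (Real.Gamma (s+1) * 2 ^ s) * (t ^ (a-1) * Real.exp (-(1/2*t))) := by gcongr
    _ = _ := by ring

/-- flatness with Gevrey constants -/
lemma exp_le_pow {s γ : ℝ} (hs : 0 < s) (hγ : 0 < γ) (N : ℕ) {τ : ℝ} (hτ : 0 < τ) :
    Real.exp (-γ / τ ^ (1 / s)) ≤ ((γ ^ s)⁻¹) ^ N * Real.Gamma (s * N + 1) * τ ^ N := by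
  have hy : 0 < γ / τ ^ (1 / s) := by positivity
  have h := rpow_exp_le_Gamma (a := s * N) (by positivity) hy
  have e : (γ / τ ^ (1 / s)) ^ (s * N) = (γ ^ s) ^ N / τ ^ N := by
    rw [Real.div_rpow hγ.le (by positivity), ← Real.rpow_mul hτ.le, Real.rpow_mul hγ.le,
      Real.rpow_natCast]
    congr 1
    rw [← Real.rpow_natCast]; congr 1; field_simp
  rw [e] at h
  rw [neg_div]
  have hp : 0 < (γ ^ s) ^ N := by positivity
  have ht : 0 < τ ^ N := by positivity
  rw [div_mul_eq_mul_div, div_le_iff₀ ht] at h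
  rw [inv_pow, mul_assoc, ← div_eq_inv_mul, le_div_iff₀ hp]
  linarith

/-- Antiholomorphic part of a real-linear functional. -/
def dbar {E : Type*} [NormedAddCommGroup E] [NormedSpace ℂ E] (w : E) :
    (E →L[ℝ] ℂ) →L[ℝ] ℂ :=
  (1/2 : ℝ) • (ContinuousLinearMap.apply ℝ ℂ w +
    (I • (ContinuousLinearMap.id ℝ ℂ)).comp (ContinuousLinearMap.apply ℝ ℂ (I • w)))

lemma dbar_apply {E : Type*} [NormedAddCommGroup E] [NormedSpace ℂ E] (w : E) (L : E →L[ℝ] ℂ) :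
    dbar w L = (1/2 : ℂ) * (L w + I * L (I • w)) := by
  simp [dbar]; ring

lemma norm_dbar_le {E : Type*} [NormedAddCommGroup E] [NormedSpace ℂ E] (w : E) (L : E →L[ℝ] ℂ) :
    ‖dbar w L‖ ≤ ‖L‖ * ‖w‖ := by
  rw [dbar_apply]
  have h1 := L.le_opNorm w
  have h2 := L.le_opNorm (I • w)
  rw [norm_smul] at h2
  simp only [norm_I, one_mul] at h2
  calc _ ≤ (1/2:ℝ) * (‖L w‖ + ‖L (I • w)‖) := by
        rw [norm_mul]
        have : ‖L w + I * L (I • w)‖ ≤ ‖L w‖ + ‖L (I • w)‖ := by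
          refine (norm_add_le _ _).trans ?_
          simp
        norm_num at this ⊢
        exact this
    _ ≤ _ := by linarith

lemma integrableOn_polar {K : ℝ × ℝ → ℂ} (hK : Continuous K) {R : ℝ}
    (h0 : ∀ p : ℝ × ℝ, R ≤ p.1 → K p = 0) : IntegrableOn K (Ioi 0 ×ˢ Ioo (-Real.pi) Real.pi) := by
  have h1 : IntegrableOn K (Icc 0 R ×ˢ Icc (-Real.pi) Real.pi) :=
    hK.continuousOn.integrableOn_compact (isCompact_Icc.prod isCompact_Icc)
  refine h1.of_forall_sdiff_eq_zero (measurableSet_Ioi.prod measurableSet_Ioo) ?_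
  rintro ⟨p, q⟩ ⟨hp, hn⟩
  apply h0
  by_contra! hlt
  exact hn ⟨⟨le_of_lt hp.1, hlt.le⟩, Ioo_subset_Icc_self hp.2⟩

lemma pompeiu_zero {g : ℂ → ℂ} (hg : ContDiff ℝ 1 g) (hc : HasCompactSupport g) :
    ∫ t : ℂ, dbar (1:ℂ) (fderiv ℝ g t) / t = -Real.pi * g 0 := by
  obtain ⟨R, hR⟩ : ∃ R : ℝ, ∀ z : ℂ, R ≤ ‖z‖ → fderiv ℝ g z = 0 ∧ g z = 0 := by
    obtain ⟨R, hR⟩ := hc.isCompact.isBounded.subset_ball 0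
    refine ⟨R, fun z hz => ?_⟩
    have : z ∉ tsupport g := fun h => by
      have := hR h; rw [mem_ball_zero_iff] at this; linarith
    refine ⟨?_, image_eq_zero_of_notMem_tsupport this⟩
    by_contra h
    exact this (support_fderiv_subset ℝ h)
  have hdc : Continuous (fderiv ℝ g) := hg.continuous_fderiv (by norm_num)
  have hgd : ∀ z, HasFDerivAt g (fderiv ℝ g z) z := fun z =>
    (hg.differentiable (by norm_num) z).hasFDerivAt
  let e : ℝ → ℂ := fun θ => Complex.exp (θ * I)
  let A : ℝ × ℝ → ℂ := fun p => fderiv ℝ g (p.1 * e p.2) (e p.2)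
  let B : ℝ × ℝ → ℂ := fun p => fderiv ℝ g (p.1 * e p.2) (I * e p.2)
  have hec : Continuous e := by fun_prop
  have hne : ∀ θ, ‖e θ‖ = 1 := fun θ => Complex.norm_exp_ofReal_mul_I θ
  have hA : Continuous A := by
    refine (hdc.comp (by fun_prop)).clm_apply (by fun_prop)
  have hB : Continuous B := by
    refine (hdc.comp (by fun_prop)).clm_apply (by fun_prop)
  have hbig : ∀ p : ℝ × ℝ, max R 0 ≤ p.1 → R ≤ ‖(p.1 : ℂ) * e p.2‖ := by
    intro p hp
    rw [norm_mul, hne, mul_one, Complex.norm_real, Real.norm_eq_abs]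
    exact (le_max_left _ _).trans (hp.trans (le_abs_self _))
  have hA0 : ∀ p : ℝ × ℝ, max R 0 ≤ p.1 → A p = 0 := fun p hp => by
    simp [A, (hR _ (hbig p hp)).1]
  have hB0 : ∀ p : ℝ × ℝ, max R 0 ≤ p.1 → B p = 0 := fun p hp => by
    simp [B, (hR _ (hbig p hp)).1]
  have hAi := integrableOn_polar hA hA0
  have hBi := integrableOn_polar hB hB0
  have hAint : ∫ p in Ioi (0:ℝ) ×ˢ Ioo (-Real.pi) Real.pi, A p = -(2 * Real.pi) * g 0 := by
    rw [Measure.volume_eq_prod] at hAi ⊢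
    have hsw := setIntegral_prod_swap (μ := (volume : Measure ℝ)) (ν := (volume : Measure ℝ)) (Ioi (0:ℝ)) (Ioo (-Real.pi) Real.pi) A
    rw [← hsw, setIntegral_prod (fun z : ℝ × ℝ => A z.swap) hAi.swap]
    have : ∀ θ : ℝ, ∫ r in Ioi (0:ℝ), A (r, θ) = - g 0 := by
      intro θ
      have hd : ∀ r : ℝ, HasDerivAt (fun r : ℝ => g (r * e θ)) (A (r, θ)) r := by
        intro r
        have h1 : HasDerivAt (fun r : ℝ => (r:ℂ) * e θ) (e θ) r := by
          simpa using (Complex.ofRealCLM.hasDerivAt (x := r)).mul_const (e θ)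
        exact (hgd _).comp_hasDerivAt r h1
      have hi : IntegrableOn (fun r => A (r, θ)) (Ioi 0) := by
        have h1 : IntegrableOn (fun r => A (r, θ)) (Icc 0 (max R 0)) :=
          (hA.comp (by fun_prop : Continuous fun r : ℝ => (r, θ))).continuousOn.integrableOn_compact isCompact_Icc
        refine h1.of_forall_sdiff_eq_zero measurableSet_Ioi ?_
        rintro r ⟨hr, hn⟩
        apply hA0
        by_contra! hlt
        exact hn ⟨le_of_lt hr, hlt.le⟩
      have ht : Tendsto (fun r : ℝ => g (r * e θ)) atTop (𝓝 0) := by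
        refine tendsto_const_nhds.congr' ?_
        filter_upwards [eventually_ge_atTop (max R 0)] with r hr
        exact (hR _ (hbig (r, θ) hr)).2.symm
      have := integral_Ioi_of_hasDerivAt_of_tendsto' (a := 0) (fun r _ => hd r) hi ht
      rw [this]; simp
    simp only [Prod.swap_prod_mk, this]
    rw [setIntegral_const]
    simp [Measure.real, Real.pi_pos.le]
    ring_nf
    exact Or.inl trivial
  have hBint : ∫ p in Ioi (0:ℝ) ×ˢ Ioo (-Real.pi) Real.pi, B p = 0 := by
    rw [Measure.volume_eq_prod] at hBi ⊢
    rw [setIntegral_prod _ hBi]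
    refine setIntegral_eq_zero_of_forall_eq_zero fun r hr => ?_
    rw [mem_Ioi] at hr
    have hd : ∀ θ : ℝ, HasDerivAt (fun θ : ℝ => g (r * e θ)) ((r:ℂ) * B (r, θ)) θ := by
      intro θ
      have h0 : HasDerivAt e (I * e θ) θ := by
        have : HasDerivAt (fun θ : ℝ => (θ:ℂ) * I) I θ := by
          simpa using (Complex.ofRealCLM.hasDerivAt (x := θ)).mul_const I
        simpa [e, mul_comm] using this.cexp
      have h1 : HasDerivAt (fun θ : ℝ => (r:ℂ) * e θ) (r * (I * e θ)) θ := h0.const_mul _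
      have := (hgd _).comp_hasDerivAt θ h1
      have e1 : (r:ℂ) * B (r, θ) = fderiv ℝ g (r * e θ) (r * (I * e θ)) := by
        have := (fderiv ℝ g (r * e θ)).map_smul r (I * e θ)
        simp only [real_smul] at this
        rw [this]
      rw [e1]; exact this
    have := intervalIntegral.integral_eq_sub_of_hasDerivAt (a := -Real.pi) (b := Real.pi)
      (fun θ _ => hd θ) (by
        apply Continuous.intervalIntegrable
        exact continuous_const.mul (hB.comp (by fun_prop)))
    rw [intervalIntegral.integral_const_mul,
      intervalIntegral.integral_of_le (by linarith [Real.pi_pos]),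
      ← integral_Ioc_eq_integral_Ioo.symm] at this
    have e2 : e Real.pi = e (-Real.pi) := by simp [e, Complex.exp_neg]
    rw [e2, sub_self] at this
    exact (mul_eq_zero.1 this).resolve_left (by exact_mod_cast hr.ne')
  rw [← Complex.integral_comp_polarCoord_symm]
  have hpt : ∀ p ∈ polarCoord.target, p.1 • (dbar (1:ℂ) (fderiv ℝ g (Complex.polarCoord.symm p)) /
      Complex.polarCoord.symm p) = (1/2:ℂ) * A p + (I/2) * B p := by
    rintro ⟨ρ, θ⟩ hp
    have hρ : 0 < ρ := hp.1
    have e1 : Complex.polarCoord.symm (ρ, θ) = ρ * e θ := by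
      simp [Complex.polarCoord_symm_apply, e, Complex.exp_mul_I]
    have hA' : A (ρ, θ) = Real.cos θ * fderiv ℝ g (ρ * e θ) 1 + Real.sin θ * fderiv ℝ g (ρ * e θ) I := by
      have : e θ = Real.cos θ • (1:ℂ) + Real.sin θ • I := by
        simp [e, Complex.exp_mul_I]
      show fderiv ℝ g (ρ * e θ) (e θ) = _
      conv_lhs => rw [show fderiv ℝ g (ρ * e θ) (e θ) = fderiv ℝ g (ρ * e θ) (Real.cos θ • (1:ℂ) + Real.sin θ • I) from congrArg _ this]
      rw [map_add, map_smul, map_smul]; simp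
    have hB' : B (ρ, θ) = - Real.sin θ * fderiv ℝ g (ρ * e θ) 1 + Real.cos θ * fderiv ℝ g (ρ * e θ) I := by
      have : I * e θ = (-Real.sin θ) • (1:ℂ) + Real.cos θ • I := by
        simp [e, Complex.exp_mul_I]; ring_nf; simp; ring
      show fderiv ℝ g (ρ * e θ) (I * e θ) = _
      conv_lhs => rw [show fderiv ℝ g (ρ * e θ) (I * e θ) = fderiv ℝ g (ρ * e θ) ((-Real.sin θ) • (1:ℂ) + Real.cos θ • I) from congrArg _ this]
      rw [map_add, map_smul, map_smul]; simp
    rw [hA', hB', e1, dbar_apply]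
    have hρ' : (ρ:ℂ) ≠ 0 := by exact_mod_cast hρ.ne'
    have he : e θ ≠ 0 := Complex.exp_ne_zero _
    have e3 : e θ = (Real.cos θ : ℂ) + Real.sin θ * I := by simp [e, Complex.exp_mul_I]
    have hcs : ((Real.cos θ : ℂ))^2 + (Real.sin θ : ℂ)^2 = 1 := by
      exact_mod_cast Real.cos_sq_add_sin_sq θ
    simp only [smul_eq_mul, mul_one, real_smul]
    generalize fderiv ℝ g (ρ * e θ) 1 = X
    generalize fderiv ℝ g (ρ * e θ) I = Y
    rw [mul_div_assoc']
    rw [div_eq_iff (mul_ne_zero hρ' he)]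
    generalize (Real.cos θ : ℂ) = c at *
    generalize (Real.sin θ : ℂ) = σ at *
    rw [e3]
    have hI : I ^ 2 = -1 := Complex.I_sq
    linear_combination (-(1/2) * (ρ:ℂ) * (X + I * Y)) * hcs + (-(1/2)*(ρ:ℂ) * (-σ^2*X+σ*c*Y) ) * hI
  rw [setIntegral_congr_fun polarCoord.open_target.measurableSet hpt]
  have : polarCoord.target = Ioi (0:ℝ) ×ˢ Ioo (-Real.pi) Real.pi := rfl
  rw [this, integral_add (hAi.const_mul _) (hBi.const_mul _), integral_const_mul, integral_const_mul,
    hAint, hBint]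
  ring

lemma pompeiu {g : ℂ → ℂ} (hg : ContDiff ℝ 1 g) (hc : HasCompactSupport g) (z : ℂ) :
    ∫ t : ℂ, dbar (1:ℂ) (fderiv ℝ g (z + t)) / t = -Real.pi * g z := by
  have h := pompeiu_zero (g := fun t => g (z + t)) (hg.comp (by fun_prop))
    (hc.comp_homeomorph (Homeomorph.addLeft z))
  simp only [add_zero] at h
  rw [← h]
  congr 1; ext t; congr 2
  rw [fderiv_comp_add_left]

end RS

namespace RS
open MeasureTheory Metric Topology Filter

def ker (R : ℝ) : ℂ → ℝ := fun t => (Iio R).indicator (fun y => y⁻¹) ‖t‖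

lemma ker_integrable (R : ℝ) : Integrable (ker R) := by
  unfold ker
  have := (integrable_fun_norm_addHaar (E := ℂ) (volume : Measure ℂ) (f := (Iio R).indicator (fun y : ℝ => y⁻¹))).1
  rw [integrable_fun_norm_addHaar (E := ℂ) (volume : Measure ℂ)
    (f := (Iio R).indicator (fun y : ℝ => y⁻¹))]
  simp only [Complex.finrank_real_complex]
  have h1 : IntegrableOn (fun _ : ℝ => (1:ℝ)) (Ioc 0 R) := by simp
  have h2 : IntegrableOn ((Iio R).indicator (fun _ : ℝ => (1:ℝ))) (Ioi 0) := by
    have : IntegrableOn ((Iio R).indicator (fun _ : ℝ => (1:ℝ))) (Ioc 0 R) :=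
      h1.indicator measurableSet_Iio
    refine this.of_forall_sdiff_eq_zero measurableSet_Ioi ?_
    rintro x ⟨hx, hn⟩
    rw [indicator_of_notMem]
    intro hl
    exact hn ⟨hx, le_of_lt hl⟩
  refine h2.congr_fun ?_ measurableSet_Ioi
  intro y hy
  have hy' : y ≠ 0 := (mem_Ioi.1 hy).ne'
  by_cases h : y ∈ Iio R <;> simp [h, hy']

lemma ker_nonneg (R : ℝ) (t : ℂ) : 0 ≤ ker R t := by
  unfold ker
  by_cases h : ‖t‖ ∈ Iio R <;> simp [h]

variable {E : Type*} [NormedAddCommGroup E] [NormedSpace ℂ E]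

def ct (v : E) (W : E → ℂ) (x : E) : ℂ := -(1 / Real.pi : ℂ) * ∫ t : ℂ, t⁻¹ * W (x + t • v)

lemma norm_inv_mul_le {G : Type*} [NormedAddCommGroup G] [NormedSpace ℂ G] {R B : ℝ} {t : ℂ} {z : G}
    (h0 : R ≤ ‖t‖ → z = 0) (h1 : ‖z‖ ≤ B) : ‖t⁻¹ • z‖ ≤ B * ker R t := by
  by_cases h : ‖t‖ < R
  · rw [norm_smul, norm_inv, mul_comm]
    simp only [ker, mem_Iio, h, indicator_of_mem]
    gcongr
  · rw [h0 (not_lt.1 h)]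
    simp [ker, h]

lemma ct_bound (v : E) (lam : E →L[ℂ] ℂ) (hlv : lam v = 1) {T : Set E}
    (hTv : ∀ x ∈ T, ∀ t : ℂ, x + t • v ∈ T) {W : E → ℂ} 
    (hW0 : ∀ x ∈ T, 3/4 ≤ ‖lam x‖ → W x = 0) {M : ℝ} (hM : ∀ x ∈ T, ‖W x‖ ≤ M)
    {x : E} (hx : x ∈ T) (hlx : ‖lam x‖ < 1) : ‖ct v W x‖ ≤ (∫ t, ker 2 t) * M := by
  unfold ct
  have h1 : ‖∫ t : ℂ, t⁻¹ * W (x + t • v)‖ ≤ ∫ t : ℂ, M * ker 2 t := by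
    refine norm_integral_le_of_norm_le ((ker_integrable 2).const_mul M) (Eventually.of_forall fun t => ?_)
    refine norm_inv_mul_le (z := W (x + t • v)) (fun ht => hW0 _ (hTv x hx t) ?_) (hM _ (hTv x hx t))
    rw [map_add, map_smul, hlv, smul_eq_mul, mul_one]
    have := norm_sub_le (lam x + t) (lam x)
    rw [add_sub_cancel_left] at this
    linarith
  rw [integral_const_mul] at h1
  have h3 : 0 ≤ M := (norm_nonneg _).trans (hM x hx)
  have h4 : 0 ≤ ∫ t, ker 2 t := integral_nonneg (ker_nonneg 2)
  rw [norm_mul]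
  have h2 : ‖-(1 / Real.pi : ℂ)‖ ≤ 1 := by
    rw [norm_neg, norm_div, norm_one, Complex.norm_real, Real.norm_eq_abs, abs_of_pos Real.pi_pos,
      div_le_one Real.pi_pos]
    linarith [Real.pi_gt_three]
  calc _ ≤ 1 * (M * ∫ t, ker 2 t) := by gcongr
    _ = _ := by ring

lemma dbar_smul (w : E) (c : ℂ) (L : E →L[ℝ] ℂ) : dbar w (c • L) = c * dbar w L := by
  simp only [dbar_apply, ContinuousLinearMap.smul_apply, smul_eq_mul]; ring

lemma ct_deriv [FiniteDimensional ℂ E] (v : E) (lam : E →L[ℂ] ℂ) (hlv : lam v = 1) {T : Set E}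
    (hT : IsOpen T) (hTv : ∀ x ∈ T, ∀ t : ℂ, x + t • v ∈ T) {W : E → ℂ} (hW : ContDiffOn ℝ 1 W T)
    (hW0 : ∀ x ∈ T, 3/4 ≤ ‖lam x‖ → W x = 0) {x : E} (hx : x ∈ T) :
    DifferentiableAt ℝ (ct v W) x ∧
    ∀ w : E, ∀ V : E → ℂ, ContDiffOn ℝ 1 V T → (∀ x ∈ T, 3/4 ≤ ‖lam x‖ → V x = 0) →
      (∀ y ∈ T, dbar w (fderiv ℝ W y) = dbar v (fderiv ℝ V y)) → 
      dbar w (fderiv ℝ (ct v W) x) = V x := by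
  have : ProperSpace E := FiniteDimensional.proper ℂ E
  obtain ⟨ε, hε, hεT⟩ := Metric.nhds_basis_closedBall.mem_iff.1 (hT.mem_nhds hx)
  have hdc : ContinuousOn (fderiv ℝ W) T := hW.continuousOn_fderiv_of_isOpen hT le_rfl
  have hWd : ∀ y ∈ T, HasFDerivAt W (fderiv ℝ W y) y := fun y hy =>
    ((hW.differentiableOn (by norm_num)).differentiableAt (hT.mem_nhds hy)).hasFDerivAt
  have hlamv : ∀ (y : E) (t : ℂ), lam (y + t • v) = lam y + t := fun y t => by
    rw [map_add, map_smul, hlv, smul_eq_mul, mul_one]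
  have hfd0 : ∀ y ∈ T, 1 ≤ ‖lam y‖ → fderiv ℝ W y = 0 := by
    intro y hy h1
    have : W =ᶠ[𝓝 y] fun _ => 0 := by
      have h2 : ∀ᶠ z in 𝓝 y, 3/4 < ‖lam z‖ :=
        (lam.continuous.norm.continuousAt).eventually_const_lt (by linarith)
      filter_upwards [h2, hT.mem_nhds hy] with z hz hzT using hW0 z hzT hz.le
    rw [this.fderiv_eq]; simp
  set R : ℝ := ‖lam x‖ + ‖lam‖ * ε + 2 with hR
  have hbig : ∀ y ∈ closedBall x ε, ∀ t : ℂ, R ≤ ‖t‖ → 1 ≤ ‖lam (y + t • v)‖ := by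
    intro y hy t ht
    rw [hlamv]
    have h1 : ‖lam (y - x)‖ ≤ ‖lam‖ * ε := (lam.le_opNorm _).trans (by
      gcongr; rw [← dist_eq_norm]; exact hy)
    rw [map_sub] at h1
    have h2 := norm_sub_le (lam y + t) (lam y)
    rw [add_sub_cancel_left] at h2
    have h3 := norm_sub_norm_le (lam y) (lam x)
    linarith
  have hK : IsCompact ((fun p : E × ℂ => p.1 + p.2 • v) '' (closedBall x ε ×ˢ closedBall 0 R)) :=
    ((isCompact_closedBall _ _).prod (isCompact_closedBall _ _)).image (by fun_prop)
  have hKT : ((fun p : E × ℂ => p.1 + p.2 • v) '' (closedBall x ε ×ˢ closedBall 0 R)) ⊆ T := by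
    rintro _ ⟨⟨y, t⟩, ⟨hy, -⟩, rfl⟩
    exact hTv y (hεT hy) t
  obtain ⟨B1, hB1⟩ := hK.exists_bound_of_continuousOn (hW.continuousOn.mono hKT)
  obtain ⟨B2, hB2⟩ := hK.exists_bound_of_continuousOn (hdc.mono hKT)
  have hB1' : ∀ y ∈ closedBall x ε, ∀ t : ℂ, ‖W (y + t • v)‖ ≤ max B1 0 := by
    intro y hy t
    by_cases ht : R ≤ ‖t‖
    · rw [hW0 _ (hTv y (hεT hy) t) (by linarith [hbig y hy t ht])]; simp
    · exact (hB1 _ ⟨(y, t), ⟨hy, by simpa using (not_le.1 ht).le⟩, rfl⟩).trans (le_max_left _ _)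
  have hB2' : ∀ y ∈ closedBall x ε, ∀ t : ℂ, ‖fderiv ℝ W (y + t • v)‖ ≤ max B2 0 := by
    intro y hy t
    by_cases ht : R ≤ ‖t‖
    · rw [hfd0 _ (hTv y (hεT hy) t) (hbig y hy t ht)]; simp
    · exact (hB2 _ ⟨(y, t), ⟨hy, by simpa using (not_le.1 ht).le⟩, rfl⟩).trans (le_max_left _ _)
  have hm1 : ∀ y ∈ closedBall x ε, AEStronglyMeasurable (fun t : ℂ => t⁻¹ * W (y + t • v)) volume := by
    intro y hy
    refine (measurable_inv.aestronglyMeasurable).mul ?_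
    exact (hW.continuousOn.comp_continuous (by fun_prop) (fun t => hTv y (hεT hy) t)).aestronglyMeasurable
  have hxx : x ∈ closedBall x ε := mem_closedBall_self hε.le
  have hm2 : AEStronglyMeasurable (fun t : ℂ => t⁻¹ • fderiv ℝ W (x + t • v)) volume := by
    refine AEStronglyMeasurable.smul (measurable_inv.aestronglyMeasurable) ?_
    exact (hdc.comp_continuous (by fun_prop) (fun t => hTv x hx t)).aestronglyMeasurable
  have hder : HasFDerivAt (fun y => ∫ t : ℂ, t⁻¹ * W (y + t • v))
      (∫ t : ℂ, t⁻¹ • fderiv ℝ W (x + t • v)) x := by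
    refine hasFDerivAt_integral_of_dominated_of_fderiv_le (bound := fun t => max B2 0 * ker R t)
      (F' := fun y t => t⁻¹ • fderiv ℝ W (y + t • v)) (closedBall_mem_nhds x hε) ?_ ?_ hm2 ?_ ?_ ?_
    · filter_upwards [closedBall_mem_nhds x hε] with y hy using hm1 y hy
    · refine ((ker_integrable R).const_mul (max B1 0)).mono' (hm1 x hxx) (Eventually.of_forall fun t => ?_)
      exact norm_inv_mul_le (z := W (x + t • v)) (fun ht => hW0 _ (hTv x hx t) (by
        linarith [hbig x hxx t ht])) (hB1' x hxx t)
    · exact Eventually.of_forall fun t y hy => norm_inv_mul_le (fun ht =>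
        hfd0 _ (hTv y (hεT hy) t) (hbig y hy t ht)) (hB2' y hy t)
    · exact (ker_integrable R).const_mul _
    · refine Eventually.of_forall fun t y hy => ?_
      have h1 := hWd _ (hTv y (hεT hy) t)
      have h2 : HasFDerivAt (fun y => W (y + t • v)) (fderiv ℝ W (y + t • v)) y :=
        (hasFDerivAt_comp_add_right _).2 h1
      exact h2.const_mul t⁻¹
  have hct : HasFDerivAt (ct v W) (-(1 / Real.pi : ℂ) • (∫ t : ℂ, t⁻¹ • fderiv ℝ W (x + t • v))) x :=
    hder.const_mul _
  refine ⟨hct.differentiableAt, fun w V hV hV0 hWV => ?_⟩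
  rw [hct.fderiv, dbar_smul, ← ContinuousLinearMap.integral_comp_comm]
  swap
  · refine ((ker_integrable R).const_mul (max B2 0)).mono' hm2 (Eventually.of_forall fun t => ?_)
    exact norm_inv_mul_le (fun ht => hfd0 _ (hTv x hx t) (hbig x hxx t ht)) (hB2' x hxx t)
  simp only [dbar_smul]
  have hg : ContDiff ℝ 1 (fun t : ℂ => V (x + t • v)) := by
    rw [← contDiffOn_univ]
    exact hV.comp (t := T) (by fun_prop) (fun t _ => hTv x hx t)
  have hgc : HasCompactSupport (fun t : ℂ => V (x + t • v)) := by
    refine HasCompactSupport.intro (isCompact_closedBall (0:ℂ) R) fun t ht => ?_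
    refine hV0 _ (hTv x hx t) ?_
    have : R ≤ ‖t‖ := by
      rw [mem_closedBall_zero_iff, not_le] at ht; exact ht.le
    linarith [hbig x hxx t this]
  have hp := pompeiu hg hgc 0
  simp only [zero_add, zero_smul, add_zero] at hp
  have hVd : ∀ y ∈ T, HasFDerivAt V (fderiv ℝ V y) y := fun y hy =>
    ((hV.differentiableOn (by norm_num)).differentiableAt (hT.mem_nhds hy)).hasFDerivAt
  have heq : ∀ t : ℂ, dbar (1:ℂ) (fderiv ℝ (fun t : ℂ => V (x + t • v)) t) / t =
      t⁻¹ * dbar w (fderiv ℝ W (x + t • v)) := by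
    intro t
    have h1 : HasFDerivAt (fun t : ℂ => x + t • v) ((ContinuousLinearMap.toSpanSingleton ℂ v).restrictScalars ℝ) t := by
      have := ((ContinuousLinearMap.toSpanSingleton ℂ v).restrictScalars ℝ).hasFDerivAt (x := t)
      simpa using this.const_add x
    have h2 := (hVd _ (hTv x hx t)).comp t h1
    have h3 : fderiv ℝ (fun t : ℂ => V (x + t • v)) t = _ := h2.fderiv
    rw [h3, hWV _ (hTv x hx t), div_eq_inv_mul]
    simp [dbar_apply]
  simp only [heq] at hp
  rw [hp]
  have : (Real.pi : ℂ) ≠ 0 := by exact_mod_cast Real.pi_ne_zero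
  field_simp

end RS

namespace RS
open MeasureTheory Metric Topology Filter

variable {E : Type*} [NormedAddCommGroup E] [NormedSpace ℂ E]

lemma flat {T : Set E} (hT : IsOpen T) {P F : E → ℂ} {C : ℝ}
    (hP : ∀ x ∈ T, DifferentiableAt ℝ P x)
    (hF : ∀ x ∈ T, P x ≠ 0 → ContDiffAt ℝ 1 F x) (hF0 : ∀ x ∈ T, P x = 0 → F x = 0)
    (hb : ∀ x ∈ T, P x ≠ 0 → ‖F x‖ ≤ C * ‖P x‖ ^ 2)
    (hb' : ∀ x ∈ T, P x ≠ 0 → ‖fderiv ℝ F x‖ ≤ C * ‖P x‖) :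
    ContDiffOn ℝ 1 F T ∧ ∀ x ∈ T, P x = 0 → fderiv ℝ F x = 0 := by
  have hZ : ∀ x ∈ T, P x = 0 → HasFDerivAt F (0 : E →L[ℝ] ℂ) x := by
    intro x hx hPx
    have h1 : P =O[𝓝 x] (fun y => y - x) := by
      have := (hP x hx).isBigO_sub
      simpa [hPx] using this
    have h2 : F =O[𝓝 x] (fun y => P y * P y) := by
      refine Asymptotics.IsBigO.of_bound (max C 0) ?_
      filter_upwards [hT.mem_nhds hx] with y hy
      by_cases hPy : P y = 0
      · rw [hF0 y hy hPy]; simp [hPy]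
      · refine (hb y hy hPy).trans ?_
        rw [norm_mul, ← pow_two]
        gcongr; exact le_max_left _ _
    have h3 : (fun y => P y * P y) =o[𝓝 x] (fun y => y - x) := by
      have h4 : Tendsto P (𝓝 x) (𝓝 0) := by
        have := (hP x hx).continuousAt.tendsto; rwa [hPx] at this
      have h5 : P =o[𝓝 x] (fun _ => (1:ℝ)) := (Asymptotics.isLittleO_one_iff ℝ).2 h4
      have := h5.mul_isBigO h1.norm_right
      simp only [one_mul] at this
      exact this.of_norm_right
    refine HasFDerivAt.of_isLittleO ?_
    simpa [hF0 x hx hPx] using h2.trans_isLittleO h3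
  have hd : ∀ x ∈ T, DifferentiableAt ℝ F x := by
    intro x hx
    by_cases hPx : P x = 0
    · exact (hZ x hx hPx).differentiableAt
    · exact (hF x hx hPx).differentiableAt (by norm_num)
  refine ⟨?_, fun x hx hPx => (hZ x hx hPx).fderiv⟩
  rw [show (1 : WithTop ℕ∞) = 0 + 1 by norm_num, contDiffOn_succ_iff_fderiv_of_isOpen hT]
  refine ⟨fun x hx => (hd x hx).differentiableWithinAt, by simp, ?_⟩
  rw [contDiffOn_zero]
  intro x hx
  apply ContinuousAt.continuousWithinAt
  by_cases hPx : P x = 0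
  · rw [ContinuousAt, (hZ x hx hPx).fderiv]
    rw [tendsto_zero_iff_norm_tendsto_zero]
    have h4 : Tendsto (fun y => max C 0 * ‖P y‖) (𝓝 x) (𝓝 0) := by
      have := ((hP x hx).continuousAt.norm.tendsto).const_mul (max C 0)
      simpa [hPx] using this
    refine squeeze_zero' (Eventually.of_forall fun _ => norm_nonneg _) ?_ h4
    filter_upwards [hT.mem_nhds hx] with y hy
    by_cases hPy : P y = 0
    · rw [(hZ y hy hPy).fderiv]; simp [hPy]
    · refine (hb' y hy hPy).trans ?_
      gcongr; exact le_max_left _ _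
  · exact ((hF x hx hPx).fderiv_right (m := 0) (by norm_num)).continuousAt

lemma dbar_add_left (w₁ w₂ : E) (L : E →L[ℝ] ℂ) : dbar (w₁ + w₂) L = dbar w₁ L + dbar w₂ L := by
  simp only [dbar_apply, smul_add, map_add]; ring

lemma dbar_smul_left (c : ℂ) (w : E) (L : E →L[ℝ] ℂ) :
    dbar (c • w) L = (starRingEnd ℂ c) * dbar w L := by
  have h1 : c • w = c.re • w + c.im • (I • w) := by
    conv_lhs => rw [← Complex.re_add_im c, add_smul, mul_smul]
    simp
  have h2 : I • c • w = c.re • (I • w) + (-c.im) • w := by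
    rw [h1, smul_add, smul_comm I c.re, smul_comm I c.im, smul_smul I I]
    simp
  have e1 : L (c • w) = c.re * L w + c.im * L (I • w) := by
    rw [h1, map_add, map_smul, map_smul]; simp
  have e2 : L (I • c • w) = c.re * L (I • w) - c.im * L w := by
    rw [h2, map_add, L.map_smul, L.map_smul]; simp; ring
  rw [dbar_apply, dbar_apply, e1, e2]
  have h3 : (starRingEnd ℂ c) = c.re - c.im * I := by
    apply Complex.ext <;> simp
  rw [h3]
  linear_combination ((1/2)*(c.im:ℂ) * L (I • w)) * Complex.I_sq

lemma dbar_restrict (w : E) (L : E →L[ℂ] ℂ) : dbar w (L.restrictScalars ℝ) = 0 := by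
  rw [dbar_apply]; simp [← mul_assoc]

lemma dbar_eq_zero_iff_diff {u : E → ℂ} {x : E} (hu : DifferentiableAt ℝ u x)
    (h : ∀ w, dbar w (fderiv ℝ u x) = 0) : DifferentiableAt ℂ u x := by
  rw [differentiableAt_iff_restrictScalars ℝ hu]
  have hI : ∀ w, fderiv ℝ u x (I • w) = I * fderiv ℝ u x w := by
    intro w
    have := h w
    rw [dbar_apply] at this
    have h2 : fderiv ℝ u x w + I * fderiv ℝ u x (I • w) = 0 := by
      simpa using this
    linear_combination (-I) * h2 + (fderiv ℝ u x (I • w)) * Complex.I_sq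
  refine ⟨{ toFun := fderiv ℝ u x, map_add' := by simp, map_smul' := ?_, cont := by fun_prop }, ?_⟩
  · intro c w
    have h1 : c • w = c.re • w + c.im • (I • w) := by
      conv_lhs => rw [← Complex.re_add_im c, add_smul, mul_smul]
      simp
    rw [h1, map_add, map_smul, map_smul, hI]
    simp only [RingHom.id_apply, smul_eq_mul, real_smul]
    conv_rhs => rw [← Complex.re_add_im c]
    ring
  · ext w; rfl

lemma dbar_symm {f : E → ℂ} {x : E} (hf : ContDiffAt ℝ 2 f x) (v w : E) :
    dbar v (fderiv ℝ (fun y => dbar w (fderiv ℝ f y)) x) =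
    dbar w (fderiv ℝ (fun y => dbar v (fderiv ℝ f y)) x) := by
  have hd : DifferentiableAt ℝ (fderiv ℝ f) x :=
    (hf.fderiv_right (m := 1) (by norm_num)).differentiableAt (by norm_num)
  have hs : IsSymmSndFDerivAt ℝ f x := hf.isSymmSndFDerivAt (by simp)
  have e : ∀ w, fderiv ℝ (fun y => dbar w (fderiv ℝ f y)) x = (dbar w).comp (fderiv ℝ (fderiv ℝ f) x) :=
    fun w => ((dbar w).hasFDerivAt.comp x hd.hasFDerivAt).fderiv
  rw [e, e]
  simp only [dbar_apply, ContinuousLinearMap.comp_apply]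
  rw [hs v w, hs v (I • w), hs (I • v) w, hs (I • v) (I • w)]
  ring

lemma hasFDerivAt_inv_pow {P : E → ℂ} {P' : E →L[ℝ] ℂ} {x : E} (hP : HasFDerivAt P P' x)
    (hx : P x ≠ 0) (N : ℕ) :
    HasFDerivAt (fun y => (P y ^ N)⁻¹) ((-(N:ℂ) * (P x ^ (N + 1))⁻¹) • P') x := by
  have h1 : HasDerivAt (fun z : ℂ => (z ^ N)⁻¹) (-(N:ℂ) * (P x ^ (N + 1))⁻¹) (P x) := by
    have h := HasDerivAt.fun_inv (hasDerivAt_pow N (P x)) (pow_ne_zero N hx)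
    have e : -(N:ℂ) * (P x ^ (N + 1))⁻¹ = -(↑N * P x ^ (N - 1)) / (P x ^ N) ^ 2 := by
      rcases N with _ | n
      · simp
      · simp only [Nat.add_sub_cancel]; field_simp; ring
    rw [e]; exact h
  have h2 := (h1.hasFDerivAt.restrictScalars ℝ).comp x hP
  have e : (-(N:ℂ) * (P x ^ (N + 1))⁻¹) • P' = (ContinuousLinearMap.restrictScalars ℝ
      (ContinuousLinearMap.toSpanSingleton ℂ (-(N:ℂ) * (P x ^ (N + 1))⁻¹))).comp P' := by
    ext w; simp; ring
  rw [e]; exact h2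

end RS

namespace RS
open MeasureTheory Metric Topology Filter

variable {E : Type*} [NormedAddCommGroup E] [NormedSpace ℂ E]

def bump2 : ContDiffBump (0:ℂ) := ⟨1/2, 3/4, by norm_num, by norm_num⟩

lemma dbar_comp_lin (lam : E →L[ℂ] ℂ) (L : ℂ →L[ℝ] ℂ) {w : E} (hw : lam w = 0) :
    dbar w (L.comp (lam.restrictScalars ℝ)) = 0 := by
  rw [dbar_apply]; simp [hw]

/-- the form coefficient -/
def coef (lam : E →L[ℂ] ℂ) (P f : E → ℂ) (N : ℕ) (w : E) (x : E) : ℂ :=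
  ((bump2 (lam x) : ℝ) : ℂ) * dbar w (fderiv ℝ f x) * (P x ^ (N + 1))⁻¹

lemma coef_hasFDerivAt (lam : E →L[ℂ] ℂ) {P f : E → ℂ} (N : ℕ) (w : E) {x : E}
    (hP : AnalyticAt ℂ P x) (hPx : P x ≠ 0) (hf : ContDiffAt ℝ 2 f x) :
    HasFDerivAt (coef lam P f N w)
      ((((bump2 (lam x) : ℝ) : ℂ) * dbar w (fderiv ℝ f x)) •
          ((-((N + 1 : ℕ):ℂ) * (P x ^ (N + 1 + 1))⁻¹) • fderiv ℝ P x) +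
        (P x ^ (N + 1))⁻¹ •
          (((bump2 (lam x) : ℝ) : ℂ) • fderiv ℝ (fun y => dbar w (fderiv ℝ f y)) x +
            dbar w (fderiv ℝ f x) •
              ((fderiv ℝ (fun z : ℂ => ((bump2 z : ℝ) : ℂ)) (lam x)).comp (lam.restrictScalars ℝ)))) x := by
  have h1 : HasFDerivAt (fun y => ((bump2 (lam y) : ℝ) : ℂ))
      ((fderiv ℝ (fun z : ℂ => ((bump2 z : ℝ) : ℂ)) (lam x)).comp (lam.restrictScalars ℝ)) x := by
    have hd : DifferentiableAt ℝ (fun z : ℂ => ((bump2 z : ℝ) : ℂ)) (lam x) := by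
      have : ContDiff ℝ 1 (fun z : ℂ => ((bump2 z : ℝ) : ℂ)) :=
        Complex.ofRealCLM.contDiff.comp bump2.contDiff
      exact this.differentiable (by norm_num) _
    exact hd.hasFDerivAt.comp x (lam.restrictScalars ℝ).hasFDerivAt
  have h2 : HasFDerivAt (fun y => dbar w (fderiv ℝ f y)) (fderiv ℝ (fun y => dbar w (fderiv ℝ f y)) x) x := by
    have hd : DifferentiableAt ℝ (fderiv ℝ f) x :=
      (hf.fderiv_right (m := 1) (by norm_num)).differentiableAt (by norm_num)
    exact ((dbar w).differentiableAt.comp x hd).hasFDerivAt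
  have hPd : HasFDerivAt P (fderiv ℝ P x) x :=
    (hP.differentiableAt.restrictScalars ℝ).hasFDerivAt
  exact (h1.mul h2).mul (hasFDerivAt_inv_pow hPd hPx (N+1))

lemma coef_zero (lam : E →L[ℂ] ℂ) (P f : E → ℂ) (N : ℕ) (w : E) {x : E} (h : 3/4 ≤ ‖lam x‖) :
    coef lam P f N w x = 0 := by
  have : bump2 (lam x) = 0 := bump2.zero_of_le_dist (by simpa [bump2] using h)
  simp [coef, this]

lemma norm_bump2_le (z : ℂ) : ‖((bump2 z : ℝ) : ℂ)‖ ≤ 1 := by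
  rw [Complex.norm_real, Real.norm_eq_abs, abs_of_nonneg bump2.nonneg]
  exact bump2.le_one

lemma exists_bump2_fderiv_le : ∃ D : ℝ, 0 ≤ D ∧ ∀ z, ‖fderiv ℝ (fun z : ℂ => ((bump2 z : ℝ) : ℂ)) z‖ ≤ D := by
  have hc : ContDiff ℝ 1 (fun z : ℂ => ((bump2 z : ℝ) : ℂ)) :=
    Complex.ofRealCLM.contDiff.comp bump2.contDiff
  have hcs : HasCompactSupport (fun z : ℂ => ((bump2 z : ℝ) : ℂ)) :=
    bump2.hasCompactSupport.comp_left (g := fun r : ℝ => (r:ℂ)) (by simp)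
  obtain ⟨D, hD⟩ := (hc.continuous_fderiv (by norm_num)).bounded_above_of_compact_support (hcs.fderiv ℝ)
  exact ⟨D, (norm_nonneg _).trans (hD 0), hD⟩

lemma coef_contDiffOn (lam : E →L[ℂ] ℂ) {T : Set E} (hT : IsOpen T)
    {P f : E → ℂ} (hP : ∀ x ∈ T, ‖lam x‖ < 1 → AnalyticAt ℂ P x) {B : ℝ}
    (hPB : ∀ x ∈ T, ‖lam x‖ < 1 → ‖P x‖ ≤ B ∧ ‖fderiv ℝ P x‖ ≤ B)
    (hf : ∀ x ∈ T, ‖lam x‖ < 1 → P x ≠ 0 → ContDiffAt ℝ 2 f x) (w : E)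
    (hb : ∀ k : ℕ, ∃ C, ∀ x ∈ T, ‖lam x‖ < 1 → P x ≠ 0 →
      ‖dbar w (fderiv ℝ f x)‖ ≤ C * ‖P x‖ ^ k ∧
      ‖fderiv ℝ (fun y => dbar w (fderiv ℝ f y)) x‖ ≤ C * ‖P x‖ ^ k) (N : ℕ) :
    ContDiffOn ℝ 1 (coef lam P f N w) T ∧ 
      (∀ x ∈ T, ‖lam x‖ < 1 → P x = 0 → fderiv ℝ (coef lam P f N w) x = 0) ∧
      (∀ x ∈ T, 1 ≤ ‖lam x‖ → fderiv ℝ (coef lam P f N w) x = 0) := by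
  have hloc : ∀ x ∈ T, 3/4 < ‖lam x‖ → coef lam P f N w =ᶠ[𝓝 x] fun _ => 0 := by
    intro x hx h1
    have h2 : ∀ᶠ z in 𝓝 x, 3/4 < ‖lam z‖ :=
      (lam.continuous.norm.continuousAt).eventually_const_lt h1
    filter_upwards [h2] with z hz using coef_zero lam P f N w hz.le
  have hO : IsOpen (T ∩ {x | ‖lam x‖ < 1}) := 
    hT.inter (isOpen_lt (by fun_prop) continuous_const)
  obtain ⟨C, hC⟩ := hb (N + 3)
  obtain ⟨D, hD0, hD⟩ := exists_bump2_fderiv_le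
  set C' := max C 0 with hC'
  set B' := max B 0 with hB'
  have hC'0 : 0 ≤ C' := le_max_right _ _
  have hB'0 : 0 ≤ B' := le_max_right _ _
  have hfl := flat hO (P := P) (F := coef lam P f N w)
    (C := C' * (N + 1) * B' + C' * B' + C' * B' * (D * ‖lam‖) + C')
    (fun x hx => (hP x hx.1 hx.2).differentiableAt.restrictScalars ℝ) ?_ ?_ ?_ ?_
  · refine ⟨?_, fun x hx h1 h2 => hfl.2 x ⟨hx, h1⟩ h2, fun x hx h1 => ?_⟩
    · intro x hx
      by_cases h1 : ‖lam x‖ < 1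
      · exact ((hfl.1 x ⟨hx, h1⟩).contDiffAt (hO.mem_nhds ⟨hx, h1⟩)).contDiffWithinAt
      · exact (contDiffAt_const.congr_of_eventuallyEq (hloc x hx (by linarith))).contDiffWithinAt
    · rw [(hloc x hx (by linarith)).fderiv_eq]; simp
  · rintro x ⟨hx, h1⟩ hPx
    unfold coef
    have hc : ContDiff ℝ 1 (fun z : E => ((bump2 (lam z) : ℝ) : ℂ)) :=
      Complex.ofRealCLM.contDiff.comp (bump2.contDiff.comp (lam.restrictScalars ℝ).contDiff)
    refine (hc.contDiffAt.mul ?_).mul ?_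
    · exact (dbar w).contDiff.contDiffAt.comp x ((hf x hx h1 hPx).fderiv_right (m := 1) (by norm_num))
    · exact (((hP x hx h1).contDiffAt.restrict_scalars ℝ).pow _).inv (pow_ne_zero _ hPx)
  · rintro x ⟨hx, h1⟩ hPx
    simp [coef, hPx]
  · rintro x ⟨hx, h1⟩ hPx
    have hp : 0 < ‖P x‖ := norm_pos_iff.2 hPx
    have hb1 : ‖dbar w (fderiv ℝ f x)‖ ≤ C' * ‖P x‖ ^ (N + 3) :=
      (hC x hx h1 hPx).1.trans (by gcongr; exact le_max_left _ _)
    unfold coef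
    rw [norm_mul, norm_mul, norm_inv, norm_pow]
    calc _ ≤ 1 * (C' * ‖P x‖ ^ (N+3)) * (‖P x‖ ^ (N+1))⁻¹ := by
          gcongr; exact norm_bump2_le _
      _ = C' * ‖P x‖ ^ 2 := by field_simp; ring
      _ ≤ _ := by
          gcongr
          have : 0 ≤ C' * (N + 1) * B' + C' * B' + C' * B' * (D * ‖lam‖) := by positivity
          linarith
  · rintro x ⟨hx, h1⟩ hPx
    have hp : 0 < ‖P x‖ := norm_pos_iff.2 hPx
    have hb1 : ‖dbar w (fderiv ℝ f x)‖ ≤ C' * ‖P x‖ ^ (N + 3) :=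
      (hC x hx h1 hPx).1.trans (by gcongr; exact le_max_left _ _)
    have hb2 : ‖fderiv ℝ (fun y => dbar w (fderiv ℝ f y)) x‖ ≤ C' * ‖P x‖ ^ (N + 3) :=
      (hC x hx h1 hPx).2.trans (by gcongr; exact le_max_left _ _)
    have hPB1 : ‖P x‖ ≤ B' := (hPB x hx h1).1.trans (le_max_left _ _)
    have hPB2 : ‖fderiv ℝ P x‖ ≤ B' := (hPB x hx h1).2.trans (le_max_left _ _)
    rw [(coef_hasFDerivAt lam N w (hP x hx h1) hPx (hf x hx h1 hPx)).fderiv]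
    have hbump := norm_bump2_le (lam x)
    have hL : ‖(fderiv ℝ (fun z : ℂ => ((bump2 z : ℝ) : ℂ)) (lam x)).comp (lam.restrictScalars ℝ)‖ ≤ D * ‖lam‖ := by
      refine (ContinuousLinearMap.opNorm_comp_le _ _).trans ?_
      gcongr
      · exact hD _
      · exact (ContinuousLinearMap.norm_restrictScalars lam).le
    have hN : ‖(-((N + 1 : ℕ):ℂ))‖ = N + 1 := by
      rw [norm_neg, Complex.norm_natCast]; push_cast; ring
    refine (norm_add_le _ _).trans ?_
    rw [norm_smul, norm_smul, norm_smul, norm_mul, norm_mul, norm_inv, norm_inv, norm_pow, norm_pow, hN]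
    have hs : ‖((bump2 (lam x) : ℝ) : ℂ) • fderiv ℝ (fun y => dbar w (fderiv ℝ f y)) x +
            dbar w (fderiv ℝ f x) •
              ((fderiv ℝ (fun z : ℂ => ((bump2 z : ℝ) : ℂ)) (lam x)).comp (lam.restrictScalars ℝ))‖
        ≤ 1 * (C' * ‖P x‖ ^ (N + 3)) + (C' * ‖P x‖ ^ (N + 3)) * (D * ‖lam‖) := by
      refine (norm_add_le _ _).trans ?_
      rw [norm_smul, norm_smul]
      gcongr
    calc _ ≤ (1 * (C' * ‖P x‖ ^ (N+3))) * ((N + 1) * (‖P x‖ ^ (N+1+1))⁻¹ * B') +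
          (‖P x‖ ^ (N+1))⁻¹ * (1 * (C' * ‖P x‖ ^ (N + 3)) + (C' * ‖P x‖ ^ (N + 3)) * (D * ‖lam‖)) := by
          gcongr
      _ = (C' * (N + 1) * B' + C' * ‖P x‖ + C' * ‖P x‖ * (D * ‖lam‖)) * ‖P x‖ := by
          field_simp; ring
      _ ≤ (C' * (N + 1) * B' + C' * B' + C' * B' * (D * ‖lam‖) + C') * ‖P x‖ := by
          have : C' * (N + 1) * B' + C' * ‖P x‖ + C' * ‖P x‖ * (D * ‖lam‖) ≤ C' * (N + 1) * B' + C' * B' + C' * B' * (D * ‖lam‖) := by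
            gcongr
          exact mul_le_mul_of_nonneg_right (by linarith) hp.le

theorem core [FiniteDimensional ℂ E] (v : E) (lam : E →L[ℂ] ℂ) (hlv : lam v = 1) {T : Set E}
    (hT : IsOpen T) (hTv : ∀ x ∈ T, ∀ t : ℂ, x + t • v ∈ T) 
    {P f : E → ℂ} (hP : ∀ x ∈ T, ‖lam x‖ < 1 → AnalyticAt ℂ P x) {B : ℝ}
    (hPB : ∀ x ∈ T, ‖lam x‖ < 1 → ‖P x‖ ≤ B ∧ ‖fderiv ℝ P x‖ ≤ B)
    (hf : ∀ x ∈ T, ‖lam x‖ < 1 → P x ≠ 0 → ContDiffAt ℝ 2 f x)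
    (hb : ∀ w, ∀ k : ℕ, ∃ C, ∀ x ∈ T, ‖lam x‖ < 1 → P x ≠ 0 →
      ‖dbar w (fderiv ℝ f x)‖ ≤ C * ‖P x‖ ^ k ∧
      ‖fderiv ℝ (fun y => dbar w (fderiv ℝ f y)) x‖ ≤ C * ‖P x‖ ^ k)
    (hker : ∀ x ∈ T, ‖lam x‖ < 1 → 1/2 ≤ ‖lam x‖ → P x ≠ 0 → ∀ w, lam w = 0 → dbar w (fderiv ℝ f x) = 0)
    (N : ℕ) {M : ℝ} (hM0 : 0 ≤ M)
    (hM : ∀ x ∈ T, ‖lam x‖ < 1 → P x ≠ 0 → ‖dbar v (fderiv ℝ f x)‖ ≤ M * ‖P x‖ ^ (N + 1)) :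
    ∃ u : E → ℂ, (∀ x ∈ T, ‖lam x‖ < 1/2 → P x ≠ 0 → DifferentiableAt ℝ u x ∧
        ∀ w, dbar w (fderiv ℝ u x) = dbar w (fderiv ℝ f x) * (P x ^ (N + 1))⁻¹) ∧
      ∀ x ∈ T, ‖lam x‖ < 1 → ‖u x‖ ≤ (∫ t, ker 2 t) * M := by
  have hV := fun w => coef_contDiffOn lam hT hP hPB hf w (hb w) N
  have hV0 : ∀ w, ∀ x ∈ T, 3/4 ≤ ‖lam x‖ → coef lam P f N w x = 0 := fun w x _ h =>
    coef_zero lam P f N w h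
  have hVM : ∀ x ∈ T, ‖coef lam P f N v x‖ ≤ M := by
    intro x hx
    by_cases h1 : ‖lam x‖ < 1
    · by_cases hPx : P x = 0
      · simp [coef, hPx, hM0]
      · have hp : 0 < ‖P x‖ := norm_pos_iff.2 hPx
        unfold coef
        rw [norm_mul, norm_mul, norm_inv, norm_pow]
        calc _ ≤ 1 * (M * ‖P x‖ ^ (N+1)) * (‖P x‖ ^ (N+1))⁻¹ := by
              gcongr
              · exact norm_bump2_le _
              · exact hM x hx h1 hPx
          _ = M := by field_simp
    · rw [hV0 v x hx (by linarith)]; simpa using hM0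
  have hcomp : ∀ w, lam w = 0 → ∀ y ∈ T, dbar w (fderiv ℝ (coef lam P f N v) y) =
      dbar v (fderiv ℝ (coef lam P f N w) y) := by
    intro w hw y hy
    by_cases h1 : ‖lam y‖ < 1
    · by_cases hPy : P y = 0
      · rw [(hV v).2.1 y hy h1 hPy, (hV w).2.1 y hy h1 hPy]; simp
      · have hPd : fderiv ℝ P y = (fderiv ℂ P y).restrictScalars ℝ :=
          ((hP y hy h1).differentiableAt.hasFDerivAt.restrictScalars ℝ).fderiv
        rw [(coef_hasFDerivAt lam N v (hP y hy h1) hPy (hf y hy h1 hPy)).fderiv,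
          (coef_hasFDerivAt lam N w (hP y hy h1) hPy (hf y hy h1 hPy)).fderiv]
        simp only [map_add, dbar_smul, hPd, dbar_restrict, mul_zero, zero_add, dbar_comp_lin lam _ hw, add_zero]
        rw [dbar_symm (hf y hy h1 hPy) w v]
        by_cases h2 : ‖lam y‖ < 1/2
        · have : fderiv ℝ (fun z : ℂ => ((bump2 z : ℝ) : ℂ)) (lam y) = 0 := by
            have : (fun z : ℂ => ((bump2 z : ℝ) : ℂ)) =ᶠ[𝓝 (lam y)] fun _ => 1 := by
              filter_upwards [bump2.eventuallyEq_one_of_mem_ball (x := lam y) (by simpa [bump2] using h2)] with z hz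
              rw [hz]; simp
            rw [this.fderiv_eq]; simp
          rw [this]; simp
        · rw [hker y hy h1 (by linarith) hPy w hw]; simp
    · rw [(hV v).2.2 y hy (by linarith), (hV w).2.2 y hy (by linarith)]; simp
  refine ⟨ct v (coef lam P f N v), ?_, fun x hx h1 => ct_bound v lam hlv hTv (hV0 v) hVM hx h1⟩
  intro x hx h1 hPx
  obtain ⟨hd, hdb⟩ := ct_deriv v lam hlv hT hTv (hV v).1 (hV0 v) hx
  refine ⟨hd, fun w => ?_⟩
  have hval : ∀ w, coef lam P f N w x = dbar w (fderiv ℝ f x) * (P x ^ (N + 1))⁻¹ := by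
    intro w
    have : bump2 (lam x) = 1 := bump2.one_of_mem_closedBall (by simpa [bump2] using h1.le)
    simp [coef, this]
  have hv := hdb v _ (hV v).1 (hV0 v) (fun _ _ => rfl)
  have hw := hdb (w - lam w • v) _ (hV _).1 (hV0 _) (hcomp (w - lam w • v) (by simp [hlv]))
  rw [hval] at hv hw
  have hdec : w = (w - lam w • v) + lam w • v := by abel
  rw [hdec, dbar_add_left, dbar_add_left, dbar_smul_left, dbar_smul_left]
  rw [hw, hv]; ring

end RS

namespace RS
open MeasureTheory Metric Topology Filter

lemma exists_bound_fin {m : ℕ} {p : Fin m → ℝ → Prop} (h : ∀ j, ∃ D, ∀ D' ≥ D, p j D') :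
    ∃ D ≥ 0, ∀ j, p j D := by
  have : ∀ᶠ D in atTop, ∀ j, p j D := eventually_all.2 fun j => by
    obtain ⟨D, hD⟩ := h j
    filter_upwards [eventually_ge_atTop D] with D' hD' using hD D' hD'
  obtain ⟨D, h1, h2⟩ := (this.and (eventually_ge_atTop 0)).exists
  exact ⟨D, h2, h1⟩

set_option maxSynthPendingDepth 3 in
lemma angular {m : ℕ} {U : Fin m → Set ℂ} (hU : ∀ j, IsOpen (U j))
    (hsc : ∀ j, ∀ c : ℝ, 0 < c → ∀ τ ∈ U j, c • τ ∈ U j) (hcov : ∀ τ : ℂ, τ ≠ 0 → ∃ j, τ ∈ U j) :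
    ∃ φ : Fin m → ℂ → ℂ, ∃ ε > 0, ∃ D ≥ 0, 
      (∀ j, ∀ τ ≠ 0, ContDiffAt ℝ 2 (φ j) τ) ∧ (∀ j τ, ‖φ j τ‖ ≤ 1) ∧
      (∀ τ ≠ 0, ∑ j, φ j τ = 1) ∧
      (∀ j, ∀ τ ≠ 0, (φ j =ᶠ[𝓝 τ] fun _ => 0) ∨ ball τ (ε * ‖τ‖) ⊆ U j) ∧
      (∀ j, ∀ τ ≠ 0, ‖fderiv ℝ (φ j) τ‖ ≤ D / ‖τ‖) ∧
      (∀ j, ∀ τ ≠ 0, ‖fderiv ℝ (fderiv ℝ (φ j)) τ‖ ≤ D / ‖τ‖ ^ 2) := by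
  obtain ⟨ρ, hρ⟩ := SmoothPartitionOfUnity.exists_isSubordinate (modelWithCornersSelf ℝ ℂ)
    (isClosed_sphere (x := (0:ℂ)) (ε := 1)) U hU (by
      intro τ hτ
      rw [mem_iUnion]
      apply hcov
      rintro rfl; simp at hτ)
  let n : ℂ → ℂ := fun τ => ‖τ‖⁻¹ • τ
  have hn : ∀ τ ≠ 0, n τ ∈ sphere (0:ℂ) 1 := by
    intro τ hτ
    have : ‖τ‖ ≠ 0 := norm_ne_zero_iff.2 hτ
    simp [n, norm_smul, this]
  have hnd : ∀ τ ≠ 0, ContDiffAt ℝ 2 n τ := by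
    intro τ hτ
    exact ((contDiffAt_norm ℝ hτ).inv (norm_ne_zero_iff.2 hτ)).smul contDiffAt_id
  let φ : Fin m → ℂ → ℂ := fun j τ => ((ρ j (n τ) : ℝ) : ℂ)
  have hφd : ∀ j, ∀ τ ≠ 0, ContDiffAt ℝ 2 (φ j) τ := by
    intro j τ hτ
    have h1 : ContDiff ℝ 2 (ρ j) := ((ρ j).contMDiff.contDiff).of_le (by
      exact WithTop.coe_le_coe.2 le_top)
    exact Complex.ofRealCLM.contDiff.contDiffAt.comp τ (h1.contDiffAt.comp τ (hnd τ hτ))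
  have hhom : ∀ j, ∀ c : ℝ, 0 < c → ∀ τ, φ j (c • τ) = φ j τ := by
    intro j c hc τ
    have : n (c • τ) = n τ := by
      simp only [n, norm_smul, smul_smul, Real.norm_eq_abs, abs_of_pos hc]
      congr 1; field_simp
    simp only [φ, this]
  have hf1 : ∀ j, ∀ c : ℝ, 0 < c → ∀ τ, fderiv ℝ (φ j) τ = c • fderiv ℝ (φ j) (c • τ) := by
    intro j c hc τ
    rw [← fderiv_comp_smul]
    congr 1; ext τ; exact (hhom j c hc τ).symm
  have hf2 : ∀ j, ∀ c : ℝ, 0 < c → ∀ τ, fderiv ℝ (fderiv ℝ (φ j)) τ =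
      c • c • fderiv ℝ (fderiv ℝ (φ j)) (c • τ) := by
    intro j c hc τ
    have h1 : fderiv ℝ (φ j) = c • (fun τ => fderiv ℝ (φ j) (c • τ)) := by
      ext1 τ; exact hf1 j c hc τ
    conv_lhs => rw [h1]
    rw [fderiv_const_smul_field, Pi.smul_apply, fderiv_comp_smul]
  have hsph : ∀ τ ∈ sphere (0:ℂ) 1, τ ≠ 0 := by
    rintro τ hτ rfl; simp at hτ
  have hB1 : ∃ D ≥ 0, ∀ j, ∀ τ ∈ sphere (0:ℂ) 1, ‖fderiv ℝ (φ j) τ‖ ≤ D := by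
    refine exists_bound_fin fun j => ?_
    obtain ⟨D, hD⟩ := (isCompact_sphere (0:ℂ) 1).exists_bound_of_continuousOn (f := fderiv ℝ (φ j))
      (fun τ hτ => ((hφd j τ (hsph τ hτ)).fderiv_right (m := 1) (by norm_num)).continuousAt.continuousWithinAt)
    exact ⟨D, fun D' hD' τ hτ => (hD τ hτ).trans hD'⟩
  have hB2 : ∃ D ≥ 0, ∀ j, ∀ τ ∈ sphere (0:ℂ) 1, ‖fderiv ℝ (fderiv ℝ (φ j)) τ‖ ≤ D := by
    refine exists_bound_fin fun j => ?_
    obtain ⟨D, hD⟩ := (isCompact_sphere (0:ℂ) 1).exists_bound_of_continuousOn (f := fderiv ℝ (fderiv ℝ (φ j)))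
      (fun τ hτ => (((hφd j τ (hsph τ hτ)).fderiv_right (m := 1) (by norm_num)).fderiv_right (m := 0)
        (by norm_num)).continuousAt.continuousWithinAt)
    exact ⟨D, fun D' hD' τ hτ => (hD τ hτ).trans hD'⟩
  obtain ⟨D1, hD10, hD1⟩ := hB1
  obtain ⟨D2, hD20, hD2⟩ := hB2
  have hε : ∃ ε > 0, ∀ j, thickening ε (tsupport (ρ j) ∩ sphere (0:ℂ) 1) ⊆ U j := by
    have : ∀ᶠ ε in 𝓝[>] (0:ℝ), ∀ j, thickening ε (tsupport (ρ j) ∩ sphere (0:ℂ) 1) ⊆ U j :=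
      eventually_all.2 fun j => by
        have hK : IsCompact (tsupport (ρ j) ∩ sphere (0:ℂ) 1) :=
          (isCompact_sphere _ _).inter_left (isClosed_tsupport _)
        obtain ⟨δ, hδ, hδU⟩ := hK.exists_thickening_subset_open (hU j) (inter_subset_left.trans (hρ j))
        filter_upwards [Ioo_mem_nhdsGT hδ] with ε hε
        exact (thickening_mono hε.2.le _).trans hδU
    obtain ⟨ε, h1, h2⟩ := (this.and self_mem_nhdsWithin).exists
    exact ⟨ε, h2, h1⟩
  obtain ⟨ε, hε0, hε⟩ := hε
  refine ⟨φ, ε, hε0, max D1 D2, le_max_of_le_left hD10, hφd, ?_, ?_, ?_, ?_, ?_⟩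
  · intro j τ
    simp only [φ, Complex.norm_real, Real.norm_eq_abs]
    rw [abs_of_nonneg (ρ.nonneg j _)]
    exact ρ.le_one j _
  · intro τ hτ
    have := ρ.sum_eq_one (hn τ hτ)
    rw [finsum_eq_sum_of_fintype] at this
    simp only [φ]
    exact_mod_cast this
  · intro j τ hτ
    by_cases h : n τ ∈ tsupport (ρ j)
    · right
      have ht : 0 < ‖τ‖ := norm_pos_iff.2 hτ
      intro y hy
      have h1 : ‖τ‖⁻¹ • y ∈ U j := by
        apply hε j
        rw [mem_thickening_iff]
        refine ⟨n τ, ⟨h, hn τ hτ⟩, ?_⟩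
        rw [mem_ball] at hy
        simp only [n, dist_smul₀, norm_inv, norm_norm]
        rw [inv_mul_lt_iff₀ ht]; linarith
      have := hsc j ‖τ‖ ht _ h1
      rwa [smul_inv_smul₀ ht.ne'] at this
    · left
      have h1 := (hnd τ hτ).continuousAt.eventually (notMem_tsupport_iff_eventuallyEq.1 h)
      filter_upwards [h1] with y hy
      simp [φ, hy]
  · intro j τ hτ
    have ht : 0 < ‖τ‖ := norm_pos_iff.2 hτ
    rw [hf1 j ‖τ‖⁻¹ (by positivity) τ, norm_smul, norm_inv, norm_norm, div_eq_inv_mul]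
    gcongr
    exact (hD1 j _ (hn τ hτ)).trans (le_max_left _ _)
  · intro j τ hτ
    have ht : 0 < ‖τ‖ := norm_pos_iff.2 hτ
    rw [hf2 j ‖τ‖⁻¹ (by positivity) τ, norm_smul, norm_smul, norm_inv, norm_norm, div_eq_inv_mul,
      pow_two, mul_inv, mul_assoc]
    gcongr
    exact (hD2 j _ (hn τ hτ)).trans (le_max_right _ _)

end RS

namespace RS
open MeasureTheory Metric Topology Filter

structure Setup (E : Type*) [NormedAddCommGroup E] [NormedSpace ℂ E] (m : ℕ) where
  P : E → ℂ
  p : E → ℂ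
  Ω : Set E
  S : Fin m → Set E
  φ : Fin m → ℂ → ℂ
  f : Fin m → E → ℂ
  B : ℝ
  c : ℝ
  D : ℝ
  C : ℝ
  γ : ℝ
  s : ℝ
  hΩ : IsOpen Ω
  hB : 0 < B
  hc : 0 < c
  hD : 0 ≤ D
  hC : 0 ≤ C
  hγ : 0 < γ
  hs : 0 < s
  hPc : ∀ x ∈ Ω, ContinuousAt P x
  hPB : ∀ x ∈ Ω, ‖P x‖ ≤ B
  hp2 : ∀ x ∈ Ω, ContDiffAt ℝ 2 p x
  hpB1 : ∀ x ∈ Ω, ‖fderiv ℝ p x‖ ≤ B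
  hpB2 : ∀ x ∈ Ω, ‖fderiv ℝ (fderiv ℝ p) x‖ ≤ B
  hpP : ∀ x ∈ Ω, P x ≠ 0 → ‖P x‖ ≤ 2 * ‖p x‖
  hφd : ∀ j, ∀ τ ≠ 0, ContDiffAt ℝ 2 (φ j) τ
  hφ1 : ∀ j τ, ‖φ j τ‖ ≤ 1
  hφs : ∀ τ ≠ 0, ∑ j, φ j τ = 1
  hφD1 : ∀ j, ∀ τ ≠ 0, ‖fderiv ℝ (φ j) τ‖ ≤ D / ‖τ‖
  hφD2 : ∀ j, ∀ τ ≠ 0, ‖fderiv ℝ (fderiv ℝ (φ j)) τ‖ ≤ D / ‖τ‖ ^ 2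
  hact : ∀ x ∈ Ω, P x ≠ 0 → ∀ j, (φ j =ᶠ[𝓝 (p x)] fun _ => 0) ∨ ball x (c * ‖P x‖) ⊆ S j
  hS2 : ∀ x ∈ Ω, P x ≠ 0 → ∀ y ∈ ball x (c * ‖P x‖), P y ≠ 0 ∧ ‖P y‖ ≤ 2 * ‖P x‖
  hfA : ∀ j, ∀ x ∈ S j, AnalyticAt ℂ (f j) x
  hfC : ∀ i j, ∀ x ∈ S i ∩ S j, P x ≠ 0 → ‖f i x - f j x‖ ≤ C * Real.exp (-γ / ‖P x‖ ^ (1 / s))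

namespace Setup
variable {E : Type*} [NormedAddCommGroup E] [NormedSpace ℂ E] {m : ℕ} (X : Setup E m)

def ft (x : E) : ℂ := ∑ j, X.φ j (X.p x) * X.f j x

def L (j : Fin m) (x : E) : E →L[ℝ] ℂ := fderiv ℝ (fun y => X.φ j (X.p y)) x

def γ2 : ℝ := X.γ / 2 ^ (1 / X.s)

lemma hγ2 : 0 < X.γ2 := div_pos X.hγ (by positivity)

def act (x : E) (j : Fin m) : Prop := ¬ (X.φ j =ᶠ[𝓝 (X.p x)] fun _ => 0)

variable {X} {x : E}

lemma p_ne (hx : x ∈ X.Ω) (hP : X.P x ≠ 0) : X.p x ≠ 0 := by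
  intro h
  have := X.hpP x hx hP
  rw [h, norm_zero, mul_zero] at this
  exact hP (norm_le_zero_iff.1 this)

lemma good_nhds (hx : x ∈ X.Ω) (hP : X.P x ≠ 0) : ∀ᶠ y in 𝓝 x, y ∈ X.Ω ∧ X.P y ≠ 0 :=
  (X.hΩ.eventually_mem hx).and ((X.hPc x hx).eventually_ne hP)

lemma φp_contDiff (hx : x ∈ X.Ω) (hP : X.P x ≠ 0) (j : Fin m) :
    ContDiffAt ℝ 2 (fun y => X.φ j (X.p y)) x :=
  (X.hφd j _ (p_ne hx hP)).comp x (X.hp2 x hx)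

lemma act_sub (hx : x ∈ X.Ω) (hP : X.P x ≠ 0) {j : Fin m} (hj : X.act x j) :
    ball x (X.c * ‖X.P x‖) ⊆ X.S j := (X.hact x hx hP j).resolve_left hj

lemma rad_pos (hP : X.P x ≠ 0) : 0 < X.c * ‖X.P x‖ := mul_pos X.hc (norm_pos_iff.2 hP)

lemma nact_zero (hx : x ∈ X.Ω) {j : Fin m} (hj : ¬ X.act x j) :
    ∀ᶠ y in 𝓝 x, X.φ j (X.p y) = 0 := by
  have : X.φ j =ᶠ[𝓝 (X.p x)] fun _ => 0 := not_not.1 hj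
  exact (X.hp2 x hx).continuousAt.eventually this

lemma nact_L (hx : x ∈ X.Ω) {j : Fin m} (hj : ¬ X.act x j) :
    ∀ᶠ y in 𝓝 x, X.L j y = 0 := by
  filter_upwards [(nact_zero hx hj).eventually_nhds] with y hy
  have : (fun y => X.φ j (X.p y)) =ᶠ[𝓝 y] fun _ => 0 := hy
  rw [L, this.fderiv_eq]; simp

lemma exists_act (hx : x ∈ X.Ω) (hP : X.P x ≠ 0) : ∃ i, X.act x i := by
  by_contra! h
  have h1 := X.hφs _ (p_ne hx hP)
  rw [Finset.sum_eq_zero (fun j _ => (nact_zero hx (h j)).self_of_nhds)] at h1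
  exact zero_ne_one h1

lemma f_an (hx : x ∈ X.Ω) (hP : X.P x ≠ 0) {j : Fin m} (hj : X.act x j) : AnalyticAt ℂ (X.f j) x :=
  X.hfA j x (act_sub hx hP hj (mem_ball_self (rad_pos hP)))

lemma term_hasFDerivAt (hx : x ∈ X.Ω) (hP : X.P x ≠ 0) (j : Fin m) :
    ContDiffAt ℝ 2 (fun y => X.φ j (X.p y) * X.f j y) x ∧
    ∀ w, dbar w (fderiv ℝ (fun y => X.φ j (X.p y) * X.f j y) x) = X.f j x * dbar w (X.L j x) := by
  by_cases hj : X.act x j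
  · have ha := f_an hx hP hj
    refine ⟨(φp_contDiff hx hP j).mul (ha.contDiffAt.restrict_scalars ℝ), fun w => ?_⟩
    have h1 := ((φp_contDiff hx hP j).differentiableAt (by norm_num)).hasFDerivAt
    have h2 := ha.differentiableAt.hasFDerivAt.restrictScalars ℝ
    rw [(h1.fun_mul h2).fderiv, map_add, dbar_smul, dbar_smul, dbar_restrict]
    simp [L]
  · have h0 : (fun y => X.φ j (X.p y) * X.f j y) =ᶠ[𝓝 x] fun _ => 0 := by
      filter_upwards [nact_zero hx hj] with y hy
      rw [hy, zero_mul]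
    refine ⟨contDiffAt_const.congr_of_eventuallyEq h0, fun w => ?_⟩
    rw [h0.fderiv_eq, (nact_L hx hj).self_of_nhds]; simp

lemma ft_contDiff (hx : x ∈ X.Ω) (hP : X.P x ≠ 0) : ContDiffAt ℝ 2 X.ft x :=
  ContDiffAt.sum fun j _ => (term_hasFDerivAt hx hP j).1

lemma dbar_ft (hx : x ∈ X.Ω) (hP : X.P x ≠ 0) (w : E) :
    dbar w (fderiv ℝ X.ft x) = ∑ j, X.f j x * dbar w (X.L j x) := by
  have : fderiv ℝ X.ft x = ∑ j, fderiv ℝ (fun y => X.φ j (X.p y) * X.f j y) x := by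
    unfold ft
    rw [fderiv_fun_sum]
    exact fun j _ => (term_hasFDerivAt hx hP j).1.differentiableAt (by norm_num)
  rw [this, map_sum]
  exact Finset.sum_congr rfl fun j _ => (term_hasFDerivAt hx hP j).2 w

lemma sum_L (hx : x ∈ X.Ω) (hP : X.P x ≠ 0) : ∑ j, X.L j x = 0 := by
  have h1 : (fun y => ∑ j, X.φ j (X.p y)) =ᶠ[𝓝 x] fun _ => 1 := by
    filter_upwards [good_nhds hx hP] with y hy
    exact X.hφs _ (p_ne hy.1 hy.2)
  have h2 := h1.fderiv_eq (𝕜 := ℝ)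
  rw [fderiv_fun_sum (fun j _ => (φp_contDiff hx hP j).differentiableAt (by norm_num))] at h2
  simpa [L] using h2

lemma L_eq (hx : x ∈ X.Ω) (hP : X.P x ≠ 0) (j : Fin m) :
    X.L j x = (fderiv ℝ (X.φ j) (X.p x)).comp (fderiv ℝ X.p x) := by
  have h1 := ((X.hφd j _ (p_ne hx hP)).differentiableAt (by norm_num)).hasFDerivAt
  have h2 := ((X.hp2 x hx).differentiableAt (by norm_num)).hasFDerivAt
  exact (h1.comp x h2).fderiv

lemma q_inv (hx : x ∈ X.Ω) (hP : X.P x ≠ 0) : ‖X.p x‖⁻¹ ≤ 2 * ‖X.P x‖⁻¹ := by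
  have h1 := norm_pos_iff.2 hP
  have h2 := norm_pos_iff.2 (p_ne hx hP)
  have h3 := X.hpP x hx hP
  rw [inv_eq_one_div, div_le_iff₀ h2, mul_assoc, ← div_eq_inv_mul]
  have : 1/2 ≤ ‖X.p x‖ / ‖X.P x‖ := by rw [le_div_iff₀ h1]; linarith
  linarith

lemma L_bound (hx : x ∈ X.Ω) (hP : X.P x ≠ 0) (j : Fin m) :
    ‖X.L j x‖ ≤ 2 * X.D * X.B * ‖X.P x‖⁻¹ := by
  rw [L_eq hx hP]
  have h := X.hφD1 j _ (p_ne hx hP)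
  have hD := X.hD
  have hB := X.hB
  calc _ ≤ _ := ContinuousLinearMap.opNorm_comp_le _ _
    _ ≤ (X.D * (2 * ‖X.P x‖⁻¹)) * X.B := by
        gcongr
        · refine h.trans ?_
          rw [div_eq_mul_inv]
          gcongr
          exact q_inv hx hP
        · exact X.hpB1 x hx
    _ = _ := by ring

set_option maxSynthPendingDepth 3 in
lemma DL_bound (hx : x ∈ X.Ω) (hP : X.P x ≠ 0) (j : Fin m) :
    DifferentiableAt ℝ (X.L j) x ∧
    ‖fderiv ℝ (X.L j) x‖ ≤ 4 * X.D * X.B ^ 2 * ‖X.P x‖⁻¹ ^ 2 + 2 * X.D * X.B * ‖X.P x‖⁻¹ := by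
  have hp0 := p_ne hx hP
  have h1 : HasFDerivAt (fderiv ℝ (X.φ j)) (fderiv ℝ (fderiv ℝ (X.φ j)) (X.p x)) (X.p x) :=
    (((X.hφd j _ hp0).fderiv_right (m := 1) (by norm_num)).differentiableAt (by norm_num)).hasFDerivAt
  have h2 := ((X.hp2 x hx).differentiableAt (by norm_num)).hasFDerivAt
  have h3 : HasFDerivAt (fderiv ℝ X.p) (fderiv ℝ (fderiv ℝ X.p) x) x :=
    (((X.hp2 x hx).fderiv_right (m := 1) (by norm_num)).differentiableAt (by norm_num)).hasFDerivAt
  have h4 := (h1.comp x h2).clm_comp h3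
  have h5 : X.L j =ᶠ[𝓝 x] fun y => ((fderiv ℝ (X.φ j) ∘ X.p) y).comp (fderiv ℝ X.p y) := by
    filter_upwards [good_nhds hx hP] with y hy using L_eq hy.1 hy.2 j
  have h6 := h4.congr_of_eventuallyEq h5
  refine ⟨h6.differentiableAt, ?_⟩
  rw [h6.fderiv]
  have hD := X.hD
  have hB := X.hB
  have hq := q_inv hx hP
  have b1 : ‖fderiv ℝ (X.φ j) (X.p x)‖ ≤ X.D * (2 * ‖X.P x‖⁻¹) := by
    refine (X.hφD1 j _ hp0).trans ?_
    rw [div_eq_mul_inv]; gcongr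
  have b2 : ‖fderiv ℝ (fderiv ℝ (X.φ j)) (X.p x)‖ ≤ X.D * (2 * ‖X.P x‖⁻¹) ^ 2 := by
    refine (X.hφD2 j _ hp0).trans ?_
    rw [div_eq_mul_inv, ← inv_pow]; gcongr
  have b3 := X.hpB1 x hx
  have b4 := X.hpB2 x hx
  refine ContinuousLinearMap.opNorm_le_bound _ (by positivity) fun h => ?_
  have e1 : ‖(fderiv ℝ (X.φ j) (X.p x)).comp (fderiv ℝ (fderiv ℝ X.p) x h)‖ ≤
      (X.D * (2 * ‖X.P x‖⁻¹)) * (X.B * ‖h‖) := by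
    refine (ContinuousLinearMap.opNorm_comp_le _ _).trans ?_
    gcongr
    exact ContinuousLinearMap.le_of_opNorm_le _ b4 h
  have e2 : ‖(fderiv ℝ (fderiv ℝ (X.φ j)) (X.p x) (fderiv ℝ X.p x h)).comp (fderiv ℝ X.p x)‖ ≤
      (X.D * (2 * ‖X.P x‖⁻¹) ^ 2 * (X.B * ‖h‖)) * X.B := by
    refine (ContinuousLinearMap.opNorm_comp_le _ _).trans ?_
    gcongr
    refine (ContinuousLinearMap.le_of_opNorm_le _ b2 _).trans ?_
    gcongr
    exact ContinuousLinearMap.le_of_opNorm_le _ b3 h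
  calc _ ≤ (X.D * (2 * ‖X.P x‖⁻¹)) * (X.B * ‖h‖) + (X.D * (2 * ‖X.P x‖⁻¹) ^ 2 * (X.B * ‖h‖)) * X.B :=
        (norm_add_le _ _).trans (add_le_add e1 e2)
    _ = _ := by ring

lemma exp_mono (hP : X.P x ≠ 0) {q : ℝ} (hq : 0 < q) (hq2 : q ≤ 2 * ‖X.P x‖) :
    Real.exp (-X.γ / q ^ (1 / X.s)) ≤ Real.exp (-X.γ2 / ‖X.P x‖ ^ (1 / X.s)) := by
  have h1 := norm_pos_iff.2 hP
  have hγ := X.hγ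
  have hs := X.hs
  rw [Real.exp_le_exp, neg_div, neg_div, neg_le_neg_iff, γ2, div_div,
    ← Real.mul_rpow (by norm_num) h1.le]
  gcongr

lemma diff_bound (hx : x ∈ X.Ω) (hP : X.P x ≠ 0) {i j : Fin m} (hi : X.act x i) (hj : X.act x j) :
    ∀ y ∈ ball x (X.c * ‖X.P x‖), ‖X.f j y - X.f i y‖ ≤
      X.C * Real.exp (-X.γ2 / ‖X.P x‖ ^ (1 / X.s)) := by
  intro y hy
  obtain ⟨h1, h2⟩ := X.hS2 x hx hP y hy
  refine (X.hfC j i y ⟨act_sub hx hP hj hy, act_sub hx hP hi hy⟩ h1).trans ?_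
  exact mul_le_mul_of_nonneg_left (exp_mono hP (norm_pos_iff.2 h1) h2) X.hC

lemma Ddiff_bound (hx : x ∈ X.Ω) (hP : X.P x ≠ 0) {i j : Fin m} (hi : X.act x i) (hj : X.act x j) :
    HasFDerivAt (fun y => X.f j y - X.f i y) (fderiv ℝ (fun y => X.f j y - X.f i y) x) x ∧
    ‖fderiv ℝ (fun y => X.f j y - X.f i y) x‖ ≤
      2 * X.C * Real.exp (-X.γ2 / ‖X.P x‖ ^ (1 / X.s)) / (X.c * ‖X.P x‖) := by
  have hd : DifferentiableOn ℂ (fun y => X.f j y - X.f i y) (ball x (X.c * ‖X.P x‖)) := fun y hy =>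
    ((X.hfA j y (act_sub hx hP hj hy)).sub (X.hfA i y (act_sub hx hP hi hy))).differentiableAt.differentiableWithinAt
  have hdx := hd.differentiableAt (ball_mem_nhds x (rad_pos hP))
  have hr := hdx.hasFDerivAt.restrictScalars ℝ
  refine ⟨(hdx.restrictScalars ℝ).hasFDerivAt, ?_⟩
  rw [hr.fderiv, ContinuousLinearMap.norm_restrictScalars]
  have hb := diff_bound hx hP hi hj
  refine Complex.norm_fderiv_le_div_of_mapsTo_ball hd (R₂ := 2 * X.C * Real.exp (-X.γ2 / ‖X.P x‖ ^ (1 / X.s)))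
    ?_ (rad_pos hP)
  intro y hy
  have h1 := hb y hy
  have h2 := hb x (mem_ball_self (rad_pos hP))
  rw [mem_closedBall, dist_eq_norm]
  refine (norm_sub_le _ _).trans ?_
  linarith

variable (X) in
def K0 : ℝ := X.C * (2 * X.D * X.B * X.B) + X.C * (4 * X.D * X.B ^ 2 + 2 * X.D * X.B * X.B) +
  4 * X.C * X.D * X.B / X.c

lemma K0_nonneg : 0 ≤ X.K0 := by
  have := X.hC; have := X.hD; have := X.hB; have := X.hc
  unfold K0; positivity

set_option maxSynthPendingDepth 3 in
lemma term_bound (hx : x ∈ X.Ω) (hP : X.P x ≠ 0) {i : Fin m} (hi : X.act x i) (j : Fin m) (w : E) :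
    DifferentiableAt ℝ (fun y => (X.f j y - X.f i y) * dbar w (X.L j y)) x ∧
    ‖(X.f j x - X.f i x) * dbar w (X.L j x)‖ ≤
      X.K0 * ‖w‖ * Real.exp (-X.γ2 / ‖X.P x‖ ^ (1 / X.s)) * (‖X.P x‖⁻¹) ^ 2 ∧
    ‖fderiv ℝ (fun y => (X.f j y - X.f i y) * dbar w (X.L j y)) x‖ ≤
      X.K0 * ‖w‖ * Real.exp (-X.γ2 / ‖X.P x‖ ^ (1 / X.s)) * (‖X.P x‖⁻¹) ^ 2 := by
  have hK := X.K0_nonneg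
  by_cases hj : X.act x j
  · obtain ⟨d1, b1⟩ := Ddiff_bound hx hP hi hj
    have b0 := diff_bound hx hP hi hj x (mem_ball_self (rad_pos hP))
    obtain ⟨d2, b2⟩ := DL_bound hx hP j
    have b3 := L_bound hx hP j
    have d3 : HasFDerivAt (fun y => dbar w (X.L j y)) ((dbar w).comp (fderiv ℝ (X.L j) x)) x :=
      (dbar w).hasFDerivAt.comp x d2.hasFDerivAt
    have d4 := d1.fun_mul d3
    set e := Real.exp (-X.γ2 / ‖X.P x‖ ^ (1 / X.s)) with he
    have he0 : 0 < e := Real.exp_pos _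
    have hC := X.hC
    have hD := X.hD
    have hB := X.hB
    have hc := X.hc
    have hPp := norm_pos_iff.2 hP
    set q := ‖X.P x‖⁻¹ with hq
    have hq0 : 0 < q := inv_pos.2 hPp
    have hqB : q ≤ X.B * q ^ 2 := by
      have : 1 ≤ X.B * q := by
        rw [hq, ← div_eq_mul_inv, le_div_iff₀ hPp, one_mul]; exact X.hPB x hx
      nlinarith
    have c1 : ‖dbar w (X.L j x)‖ ≤ 2 * X.D * X.B * (X.B * q ^ 2) * ‖w‖ := by
      refine (norm_dbar_le _ _).trans ?_
      gcongr
      exact b3.trans (by gcongr)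
    have c1' : ‖dbar w (X.L j x)‖ ≤ 2 * X.D * X.B * q * ‖w‖ := by
      refine (norm_dbar_le _ _).trans ?_
      gcongr
    have c2 : ‖(dbar w).comp (fderiv ℝ (X.L j) x)‖ ≤
        (4 * X.D * X.B ^ 2 + 2 * X.D * X.B * X.B) * q ^ 2 * ‖w‖ := by
      refine ContinuousLinearMap.opNorm_le_bound _ (by positivity) fun h => ?_
      refine (norm_dbar_le _ _).trans ?_
      have h1 := ContinuousLinearMap.le_of_opNorm_le _ b2 h
      calc _ ≤ ((4 * X.D * X.B ^ 2 * q ^ 2 + 2 * X.D * X.B * q) * ‖h‖) * ‖w‖ :=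
          mul_le_mul_of_nonneg_right h1 (norm_nonneg w)
        _ ≤ ((4 * X.D * X.B ^ 2 * q ^ 2 + 2 * X.D * X.B * (X.B * q ^ 2)) * ‖h‖) * ‖w‖ := by gcongr
        _ = _ := by ring
    have b1' : ‖fderiv ℝ (fun y => X.f j y - X.f i y) x‖ ≤ 2 * X.C * e * (X.c⁻¹ * q) := by
      refine b1.trans (le_of_eq ?_)
      rw [hq, ← mul_inv, div_eq_mul_inv]
    have t1 : 0 ≤ X.C * (2 * X.D * X.B * X.B) * ‖w‖ * e * q ^ 2 := by positivity
    have t2 : 0 ≤ X.C * (4 * X.D * X.B ^ 2 + 2 * X.D * X.B * X.B) * ‖w‖ * e * q ^ 2 := by positivity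
    have t3 : 0 ≤ 4 * X.C * X.D * X.B / X.c * ‖w‖ * e * q ^ 2 := by positivity
    have hK' : X.K0 * ‖w‖ * e * q ^ 2 = X.C * (2 * X.D * X.B * X.B) * ‖w‖ * e * q ^ 2 +
       X.C * (4 * X.D * X.B ^ 2 + 2 * X.D * X.B * X.B) * ‖w‖ * e * q ^ 2 +
       4 * X.C * X.D * X.B / X.c * ‖w‖ * e * q ^ 2 := by unfold K0; ring
    refine ⟨d4.differentiableAt, ?_, ?_⟩
    · rw [norm_mul, hK']
      calc _ ≤ (X.C * e) * (2 * X.D * X.B * (X.B * q ^ 2) * ‖w‖) := by gcongr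
        _ = X.C * (2 * X.D * X.B * X.B) * ‖w‖ * e * q ^ 2 := by ring
        _ ≤ _ := by linarith
    · rw [d4.fderiv, hK']
      refine (norm_add_le _ _).trans ?_
      rw [norm_smul, norm_smul]
      calc _ ≤ (X.C * e) * ((4 * X.D * X.B ^ 2 + 2 * X.D * X.B * X.B) * q ^ 2 * ‖w‖) +
            (2 * X.D * X.B * q * ‖w‖) * (2 * X.C * e * (X.c⁻¹ * q)) := by gcongr
        _ = X.C * (4 * X.D * X.B ^ 2 + 2 * X.D * X.B * X.B) * ‖w‖ * e * q ^ 2 +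
            4 * X.C * X.D * X.B / X.c * ‖w‖ * e * q ^ 2 := by ring
        _ ≤ _ := by linarith
  · have h0 : (fun y => (X.f j y - X.f i y) * dbar w (X.L j y)) =ᶠ[𝓝 x] fun _ => 0 := by
      filter_upwards [nact_L hx hj] with y hy
      rw [hy]; simp
    refine ⟨(differentiableAt_const _).congr_of_eventuallyEq h0, ?_, ?_⟩
    · have := h0.self_of_nhds
      simp only at this
      rw [this, norm_zero]; positivity
    · rw [h0.fderiv_eq]; simp; positivity

lemma dbar_ft' (hx : x ∈ X.Ω) (hP : X.P x ≠ 0) (w : E) (i : Fin m) :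
    dbar w (fderiv ℝ X.ft x) = ∑ j, (X.f j x - X.f i x) * dbar w (X.L j x) := by
  simp only [sub_mul, Finset.sum_sub_distrib, ← Finset.mul_sum, ← map_sum, sum_L hx hP]
  rw [dbar_ft hx hP]; simp

lemma ft_bounds (hx : x ∈ X.Ω) (hP : X.P x ≠ 0) (w : E) :
    ‖dbar w (fderiv ℝ X.ft x)‖ ≤
      m * X.K0 * ‖w‖ * Real.exp (-X.γ2 / ‖X.P x‖ ^ (1 / X.s)) * (‖X.P x‖⁻¹) ^ 2 ∧
    ‖fderiv ℝ (fun y => dbar w (fderiv ℝ X.ft y)) x‖ ≤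
      m * X.K0 * ‖w‖ * Real.exp (-X.γ2 / ‖X.P x‖ ^ (1 / X.s)) * (‖X.P x‖⁻¹) ^ 2 := by
  obtain ⟨i, hi⟩ := exists_act hx hP
  have h := fun j => term_bound hx hP hi j w
  constructor
  · rw [dbar_ft' hx hP w i]
    refine (norm_sum_le _ _).trans ((Finset.sum_le_sum fun j _ => (h j).2.1).trans (le_of_eq ?_))
    simp; ring
  · have h1 : (fun y => dbar w (fderiv ℝ X.ft y)) =ᶠ[𝓝 x]
        fun y => ∑ j, (X.f j y - X.f i y) * dbar w (X.L j y) := by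
      filter_upwards [good_nhds hx hP] with y hy using dbar_ft' hy.1 hy.2 w i
    rw [h1.fderiv_eq, fderiv_fun_sum fun j _ => (h j).1]
    refine (norm_sum_le _ _).trans ((Finset.sum_le_sum fun j _ => (h j).2.2).trans (le_of_eq ?_))
    simp; ring

lemma ft_pow_bounds (hx : x ∈ X.Ω) (hP : X.P x ≠ 0) (w : E) (k : ℕ) :
    ‖dbar w (fderiv ℝ X.ft x)‖ ≤
      m * X.K0 * ‖w‖ * (((X.γ2 ^ X.s)⁻¹) ^ (k + 2) * Real.Gamma (X.s * (k + 2 : ℕ) + 1)) * ‖X.P x‖ ^ k ∧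
    ‖fderiv ℝ (fun y => dbar w (fderiv ℝ X.ft y)) x‖ ≤
      m * X.K0 * ‖w‖ * (((X.γ2 ^ X.s)⁻¹) ^ (k + 2) * Real.Gamma (X.s * (k + 2 : ℕ) + 1)) * ‖X.P x‖ ^ k := by
  have hPp := norm_pos_iff.2 hP
  have hK := X.K0_nonneg
  have h := ft_bounds hx hP w
  have h2 : m * X.K0 * ‖w‖ * Real.exp (-X.γ2 / ‖X.P x‖ ^ (1 / X.s)) * (‖X.P x‖⁻¹) ^ 2 ≤
     m * X.K0 * ‖w‖ * (((X.γ2 ^ X.s)⁻¹) ^ (k + 2) * Real.Gamma (X.s * (k + 2 : ℕ) + 1)) * ‖X.P x‖ ^ k := by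
    have h3 := exp_le_pow X.hs X.hγ2 (k + 2) hPp
    calc _ ≤ m * X.K0 * ‖w‖ * (((X.γ2 ^ X.s)⁻¹) ^ (k + 2) * Real.Gamma (X.s * (k + 2 : ℕ) + 1) * ‖X.P x‖ ^ (k + 2)) * (‖X.P x‖⁻¹) ^ 2 := by gcongr
      _ = _ := by
        have : ‖X.P x‖ ^ (k + 2) * (‖X.P x‖⁻¹) ^ 2 = ‖X.P x‖ ^ k := by field_simp; ring
        rw [← this]; ring
  exact ⟨h.1.trans h2, h.2.trans h2⟩

lemma ft_ker (hx : x ∈ X.Ω) (hP : X.P x ≠ 0) {w : E} (h1 : fderiv ℝ X.p x w = 0)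
    (h2 : fderiv ℝ X.p x (I • w) = 0) : dbar w (fderiv ℝ X.ft x) = 0 := by
  rw [dbar_ft hx hP]
  refine Finset.sum_eq_zero fun j _ => ?_
  rw [L_eq hx hP, dbar_apply]
  simp [h1, h2]

lemma ft_sub (hx : x ∈ X.Ω) (hP : X.P x ≠ 0) {j : Fin m} (hj : x ∈ X.S j) :
    ‖X.f j x - X.ft x‖ ≤ m * (X.C * Real.exp (-X.γ / ‖X.P x‖ ^ (1 / X.s))) := by
  have h1 : X.f j x - X.ft x = ∑ i, X.φ i (X.p x) * (X.f j x - X.f i x) := by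
    simp only [mul_sub, Finset.sum_sub_distrib, ← Finset.sum_mul, X.hφs _ (p_ne hx hP)]
    simp [ft]
  rw [h1]
  have hC := X.hC
  calc _ ≤ ∑ i : Fin m, (X.C * Real.exp (-X.γ / ‖X.P x‖ ^ (1 / X.s))) := by
        refine norm_sum_le_of_le _ fun i _ => ?_
        by_cases hi : X.act x i
        · rw [norm_mul]
          have h2 := X.hfC j i x ⟨hj, act_sub hx hP hi (mem_ball_self (rad_pos hP))⟩ hP
          calc _ ≤ 1 * ‖X.f j x - X.f i x‖ := by gcongr; exact X.hφ1 _ _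
            _ ≤ _ := by rw [one_mul]; exact h2
        · rw [(nact_zero hx hi).self_of_nhds]; simp; positivity
    _ = _ := by simp

lemma ft_norm (hx : x ∈ X.Ω) (hP : X.P x ≠ 0) {M : ℝ} (hM0 : 0 ≤ M)
    (hM : ∀ j, ∀ y ∈ X.S j, ‖X.f j y‖ ≤ M) : ‖X.ft x‖ ≤ m * M := by
  unfold ft
  calc _ ≤ ∑ i : Fin m, M := by
        refine norm_sum_le_of_le _ fun i _ => ?_
        by_cases hi : X.act x i
        · rw [norm_mul]
          have h2 := hM i x (act_sub hx hP hi (mem_ball_self (rad_pos hP)))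
          calc _ ≤ 1 * ‖X.f i x‖ := by gcongr; exact X.hφ1 _ _
            _ ≤ _ := by rw [one_mul]; exact h2
        · rw [(nact_zero hx hi).self_of_nhds]; simpa using hM0
    _ = _ := by simp

end Setup
end RS

namespace RS
open MeasureTheory Metric Topology Filter

lemma Gamma_shift {s : ℝ} (hs : 0 < s) (k : ℕ) (hk : 0 < k) : ∃ C, 0 < C ∧ ∀ N : ℕ,
    Real.Gamma (s * (N + k : ℕ) + 1) ≤ C * (2 ^ s) ^ N * Real.Gamma (s * N + 1) := by
  have hks : 0 < s * k := mul_pos hs (by exact_mod_cast hk)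
  obtain ⟨C, hC, h⟩ := Gamma_add_le hks
  refine ⟨C * 2, by positivity, fun N => ?_⟩
  have h1 := h (s * N + 1) (by have : 0 ≤ s * N := by positivity
                               linarith)
  have e1 : s * (N + k : ℕ) + 1 = s * N + 1 + s * k := by push_cast; ring
  rw [e1]
  refine h1.trans (le_of_eq ?_)
  rw [Real.rpow_add (by norm_num), Real.rpow_one, Real.rpow_mul (by norm_num), Real.rpow_natCast]
  ring

lemma ker_int_nonneg : 0 ≤ ∫ t, ker 2 t := integral_nonneg (ker_nonneg 2)

lemma KA_mono {k K a A G : ℝ} (N : ℕ) (hk : 0 ≤ k) (hkK : k ≤ K) (ha : 0 ≤ a) (haA : a ≤ A) (hG : 0 ≤ G) :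
    k * a ^ N * G ≤ K * A ^ N * G := by
  have : 0 ≤ K := hk.trans hkK
  gcongr

lemma concl {d m : ℕ} (X : Setup (Fin d → ℂ) m) (v : Fin d → ℂ) (lam : (Fin d → ℂ) →L[ℂ] ℂ)
    (hlv : lam v = 1) {T : Set (Fin d → ℂ)} (hT : IsOpen T) (hTv : ∀ x ∈ T, ∀ t : ℂ, x + t • v ∈ T)
    (hΩ : ∀ x ∈ T, ‖lam x‖ < 1 → x ∈ X.Ω)
    (hPA : ∀ x ∈ X.Ω, AnalyticAt ℂ X.P x) (hPD : ∀ x ∈ X.Ω, ‖fderiv ℝ X.P x‖ ≤ X.B)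
    (hker : ∀ x ∈ X.Ω, 1 / 2 ≤ ‖lam x‖ → X.P x ≠ 0 → ∀ w, lam w = 0 → fderiv ℝ X.p x w = 0)
    {U : Set (Fin d → ℂ)} (hU : IsOpen U) (hUT : ∀ x ∈ U, x ∈ T ∧ ‖lam x‖ < 1 / 2)
    (hUP : ∀ p ∈ U, ¬ ∀ᶠ x in 𝓝 p, X.P x = 0)
    {M : ℝ} (hM0 : 0 ≤ M) (hM : ∀ j, ∀ y ∈ X.S j, ‖X.f j y‖ ≤ M) :
    ∃ g : ℕ → (Fin d → ℂ) → ℂ, ∃ K A : ℝ, 0 < K ∧ 0 < A ∧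
      (∀ n, AnalyticOnNhd ℂ (g n) U) ∧
      (∀ n : ℕ, ∀ x ∈ U, ‖g n x‖ ≤ K * A ^ n * Real.Gamma (X.s * n + 1)) ∧
      ∀ j : Fin m, ∀ N : ℕ, ∀ x ∈ U, X.P x ≠ 0 → x ∈ X.S j →
        ‖X.f j x - ∑ n ∈ Finset.range N, g n x * X.P x ^ n‖ ≤
          K * A ^ N * Real.Gamma (X.s * N + 1) * ‖X.P x‖ ^ N := by
  have hs := X.hs
  have hB := X.hB
  have hC := X.hC
  have hK0 := X.K0_nonneg
  have hγ2 := X.hγ2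
  have hγ := X.hγ
  have hUΩ : ∀ x ∈ U, x ∈ X.Ω := fun x hx => hΩ x (hUT x hx).1 (by linarith [(hUT x hx).2])
  have hGp : ∀ N : ℕ, 0 < Real.Gamma (X.s * N + 1) := fun N => Real.Gamma_pos_of_pos (by positivity)
  set G := (X.γ2 ^ X.s)⁻¹ with hG
  have hG0 : 0 < G := by positivity
  set Mn : ℕ → ℝ := fun k => m * X.K0 * ‖v‖ * (G ^ (k + 2) * Real.Gamma (X.s * (k + 2 : ℕ) + 1)) with hMn
  have hMn0 : ∀ k, 0 ≤ Mn k := fun k => by have := (hGp (k + 2)).le; positivity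
  have hcore := fun N => core (P := X.P) (f := X.ft) (B := X.B) v lam hlv hT hTv
    (fun x hx hl => hPA x (hΩ x hx hl)) (fun x hx hl => ⟨X.hPB x (hΩ x hx hl), hPD x (hΩ x hx hl)⟩)
    (fun x hx hl hP => Setup.ft_contDiff (hΩ x hx hl) hP)
    (fun w k => ⟨_, fun x hx hl hP => Setup.ft_pow_bounds (hΩ x hx hl) hP w k⟩)
    (fun x hx hl hl2 hP w hw => Setup.ft_ker (hΩ x hx hl) hP (hker x (hΩ x hx hl) hl2 hP w hw)
      (hker x (hΩ x hx hl) hl2 hP _ (by rw [map_smul, hw, smul_zero])))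
    N (hMn0 (N + 1)) (fun x hx hl hP => (Setup.ft_pow_bounds (hΩ x hx hl) hP v (N + 1)).1)
  choose u' hu'1 hu'2 using hcore
  set u : ℕ → (Fin d → ℂ) → ℂ := fun n => match n with
    | 0 => X.ft
    | n + 1 => u' n with hu
  have hud : ∀ n, ∀ x ∈ U, X.P x ≠ 0 → DifferentiableAt ℝ (u n) x ∧
      ∀ w, dbar w (fderiv ℝ (u n) x) = dbar w (fderiv ℝ X.ft x) * (X.P x ^ n)⁻¹ := by
    intro n x hx hP
    cases n with
    | zero => exact ⟨(Setup.ft_contDiff (hUΩ x hx) hP).differentiableAt (by norm_num), fun w => by simp [hu]⟩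
    | succ n => exact hu'1 n x (hUT x hx).1 (hUT x hx).2 hP
  obtain ⟨C2, hC2, hS2⟩ := Gamma_shift hs 2 (by norm_num)
  obtain ⟨C1, hC1, hS1⟩ := Gamma_shift hs 1 (by norm_num)
  set I0 := ∫ t, ker 2 t with hI0
  have hI0' : 0 ≤ I0 := ker_int_nonneg
  set K1 := I0 * (m * X.K0 * ‖v‖ * (G ^ 2 * C2)) + m * M with hK1
  have hK1' : 0 ≤ K1 := by positivity
  set A1 := G * 2 ^ X.s with hA1
  have hA1' : 0 < A1 := by positivity
  have hub : ∀ n : ℕ, ∀ x ∈ U, X.P x ≠ 0 → ‖u n x‖ ≤ K1 * A1 ^ n * Real.Gamma (X.s * n + 1) := by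
    intro n x hx hP
    cases n with
    | zero =>
      have := Setup.ft_norm (hUΩ x hx) hP hM0 hM
      simp only [hu, pow_zero, mul_one, CharP.cast_eq_zero, mul_zero, zero_add, Real.Gamma_one]
      refine this.trans (le_add_of_nonneg_left (by positivity))
    | succ n =>
      have h1 := hu'2 n x (hUT x hx).1 (by linarith [(hUT x hx).2])
      refine h1.trans ?_
      have h2 := hS2 (n + 1)
      have h3 := (hGp (n + 1)).le
      calc I0 * Mn (n + 1) ≤ I0 * (m * X.K0 * ‖v‖ * (G ^ (n + 1 + 2) * (C2 * (2 ^ X.s) ^ (n + 1) * Real.Gamma (X.s * (n + 1 : ℕ) + 1)))) := by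
            simp only [hMn]; gcongr
        _ = (I0 * (m * X.K0 * ‖v‖ * (G ^ 2 * C2))) * A1 ^ (n + 1) * Real.Gamma (X.s * (n + 1 : ℕ) + 1) := by
            rw [hA1, mul_pow]; ring
        _ ≤ _ := by
            apply KA_mono _ (by positivity) _ (by positivity) le_rfl h3
            exact le_add_of_nonneg_right (by positivity)
  set K2 := K1 + X.B * (K1 * A1 * C1) with hK2
  have hK2' : 0 ≤ K2 := by positivity
  have h2s : (1:ℝ) ≤ 2 ^ X.s := Real.one_le_rpow (by norm_num) hs.le
  set A2 := A1 * 2 ^ X.s with hA2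
  have hA12 : A1 ≤ A2 := le_mul_of_one_le_right hA1'.le h2s
  have hgb : ∀ n : ℕ, ∀ x ∈ U, X.P x ≠ 0 → ‖u n x - X.P x * u (n + 1) x‖ ≤
      K2 * A2 ^ n * Real.Gamma (X.s * n + 1) := by
    intro n x hx hP
    have h1 := hub n x hx hP
    have h2 := hub (n + 1) x hx hP
    have h3 := hS1 n
    have h4 := X.hPB x (hUΩ x hx)
    have h5 := (hGp n).le
    calc _ ≤ ‖u n x‖ + ‖X.P x‖ * ‖u (n + 1) x‖ := by
          rw [← norm_mul]; exact norm_sub_le _ _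
      _ ≤ K1 * A1 ^ n * Real.Gamma (X.s * n + 1) + X.B * (K1 * A1 ^ (n + 1) *
          (C1 * (2 ^ X.s) ^ n * Real.Gamma (X.s * n + 1))) := by
          gcongr
          exact h2.trans (by gcongr)
      _ = K1 * A1 ^ n * Real.Gamma (X.s * n + 1) +
          (X.B * (K1 * A1 * C1)) * A2 ^ n * Real.Gamma (X.s * n + 1) := by
          rw [hA2, mul_pow]; ring
      _ ≤ K1 * A2 ^ n * Real.Gamma (X.s * n + 1) +
          (X.B * (K1 * A1 * C1)) * A2 ^ n * Real.Gamma (X.s * n + 1) := by gcongr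
      _ = _ := by rw [hK2]; ring
  have hopen : IsOpen (U ∩ {x | X.P x ≠ 0}) := by
    have : ContinuousOn X.P U := fun x hx => (X.hPc x (hUΩ x hx)).continuousWithinAt
    exact this.isOpen_inter_preimage hU isOpen_ne
  have hga : ∀ n : ℕ, AnalyticOnNhd ℂ (fun x => u n x - X.P x * u (n + 1) x) (U ∩ {x | X.P x ≠ 0}) := by
    intro n
    refine osgood hopen fun x hx => ?_
    obtain ⟨hx, hP⟩ := hx
    have hP : X.P x ≠ 0 := hP
    obtain ⟨d1, e1⟩ := hud n x hx hP
    obtain ⟨d2, e2⟩ := hud (n + 1) x hx hP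
    have d3 := (hPA x (hUΩ x hx)).differentiableAt.hasFDerivAt.restrictScalars ℝ
    have d4 := d1.hasFDerivAt.fun_sub (d3.fun_mul d2.hasFDerivAt)
    refine (dbar_eq_zero_iff_diff d4.differentiableAt fun w => ?_).differentiableWithinAt
    rw [d4.fderiv, map_sub, map_add, dbar_smul, dbar_smul, dbar_restrict, e1, e2, pow_succ]
    field_simp
    ring
  have hext := fun n => riemann_ext hU (fun x hx => hPA x (hUΩ x hx)) hUP (hga n) _ (hgb n)
  choose g hg1 hg2 hg3 using hext
  refine ⟨g, K1 + K2 + m * X.C + 1, A2 + (X.γ ^ X.s)⁻¹, by positivity, by positivity, hg1, ?_, ?_⟩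
  · intro n x hx
    refine (hg3 n x hx).trans (KA_mono n hK2' ?_ (by positivity) ?_ (hGp n).le)
    · have : 0 ≤ m * X.C := by positivity
      linarith
    · exact le_add_of_nonneg_right (by positivity)
  · intro j N x hx hP hj
    have htel : ∀ N : ℕ, ∑ n ∈ Finset.range N, g n x * X.P x ^ n = X.ft x - X.P x ^ N * u N x := by
      intro N
      induction N with
      | zero => simp [hu]
      | succ N ih => rw [Finset.sum_range_succ, ih, hg2 N x hx hP]; ring
    have h1 : X.f j x - ∑ n ∈ Finset.range N, g n x * X.P x ^ n =
        (X.f j x - X.ft x) + u N x * X.P x ^ N := by rw [htel]; ring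
    rw [h1]
    have h2 := Setup.ft_sub (hUΩ x hx) hP hj
    have h3 := exp_le_pow hs hγ N (norm_pos_iff.2 hP)
    have h4 := hub N x hx hP
    have h5 := (hGp N).le
    calc _ ≤ ‖X.f j x - X.ft x‖ + ‖u N x‖ * ‖X.P x‖ ^ N := by
          rw [← norm_pow, ← norm_mul]; exact norm_add_le _ _
      _ ≤ m * (X.C * (((X.γ ^ X.s)⁻¹) ^ N * Real.Gamma (X.s * N + 1) * ‖X.P x‖ ^ N)) +
          (K1 * A1 ^ N * Real.Gamma (X.s * N + 1)) * ‖X.P x‖ ^ N := by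
          gcongr
          exact h2.trans (by gcongr)
      _ = (m * X.C * ((X.γ ^ X.s)⁻¹) ^ N * Real.Gamma (X.s * N + 1) +
          K1 * A1 ^ N * Real.Gamma (X.s * N + 1)) * ‖X.P x‖ ^ N := by ring
      _ ≤ (m * X.C * (A2 + (X.γ ^ X.s)⁻¹) ^ N * Real.Gamma (X.s * N + 1) +
          K1 * (A2 + (X.γ ^ X.s)⁻¹) ^ N * Real.Gamma (X.s * N + 1)) * ‖X.P x‖ ^ N := by
          have q1 : (X.γ ^ X.s)⁻¹ ≤ A2 + (X.γ ^ X.s)⁻¹ := le_add_of_nonneg_left (by positivity)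
          have q2 : A1 ≤ A2 + (X.γ ^ X.s)⁻¹ := hA12.trans (le_add_of_nonneg_right (by positivity))
          gcongr
      _ = (m * X.C + K1) * (A2 + (X.γ ^ X.s)⁻¹) ^ N * Real.Gamma (X.s * N + 1) * ‖X.P x‖ ^ N := by ring
      _ ≤ _ := mul_le_mul_of_nonneg_right
          (KA_mono N (by positivity) (by linarith) (by positivity) le_rfl h5) (by positivity)
end RS

namespace RS
open MeasureTheory Metric Topology Filter

lemma geom {d : ℕ} {r : ℝ} (hr : 0 < r) {P : (Fin d → ℂ) → ℂ} (hP : AnalyticOnNhd ℂ P (ball 0 r))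
    (v : Fin d → ℂ) (hv : ‖v‖ < r / 2) (lam : (Fin d → ℂ) →L[ℂ] ℂ) (hlv : lam v = 1)
    (hPv : ∀ t : ℂ, t ≠ 0 → ‖t‖ ≤ 1 → P (t • v) ≠ 0) {ε : ℝ} (hε : 0 < ε) :
    ∃ (p : (Fin d → ℂ) → ℂ) (T : Set (Fin d → ℂ)) (B c : ℝ), 0 < B ∧ 0 < c ∧ IsOpen T ∧
      (∀ x ∈ T, ∀ t : ℂ, x + t • v ∈ T) ∧ (0 ∈ T) ∧
      ∀ x ∈ T, ‖lam x‖ < 1 → x ∈ ball 0 r ∧ ‖P x‖ ≤ B ∧ ‖fderiv ℝ P x‖ ≤ B ∧ ContDiffAt ℝ 2 p x ∧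
        ‖fderiv ℝ p x‖ ≤ B ∧ ‖fderiv ℝ (fderiv ℝ p) x‖ ≤ B ∧ 
        (1 / 2 ≤ ‖lam x‖ → ∀ w, lam w = 0 → fderiv ℝ p x w = 0) ∧
        (P x ≠ 0 → ‖P x‖ ≤ 2 * ‖p x‖ ∧ ∀ y ∈ ball x (c * ‖P x‖), y ∈ ball 0 r ∧
          ‖P y - P x‖ ≤ ‖P x‖ / 2 ∧ ‖P y - p x‖ < ε * ‖p x‖) := by
  let χ : ContDiffBump (0 : ℂ) := ⟨1 / 4, 3 / 8, by norm_num, by norm_num⟩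
  have χ1 : ∀ t : ℂ, ‖t‖ ≤ 1 / 4 → χ t = 1 := fun t ht =>
    χ.one_of_mem_closedBall (mem_closedBall_zero_iff.2 ht)
  have χ0 : ∀ t : ℂ, 3 / 8 ≤ ‖t‖ → χ t = 0 := fun t ht =>
    χ.zero_of_le_dist (by simpa using ht)
  have χa : ∀ t : ℂ, ‖(χ t : ℝ)‖ ≤ 1 := fun t => by
    rw [Real.norm_eq_abs, abs_of_nonneg χ.nonneg]; exact χ.le_one
  have χb : ∀ t : ℂ, ‖(1 - χ t : ℝ)‖ ≤ 1 := fun t => by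
    have := χ.nonneg (x := t); have := χ.le_one (x := t)
    rw [Real.norm_eq_abs, abs_of_nonneg (by linarith)]; linarith
  let l : (Fin d → ℂ) →L[ℝ] ℂ := lam.restrictScalars ℝ
  let A : (Fin d → ℂ) →L[ℝ] (Fin d → ℂ) := (lam.smulRight v).restrictScalars ℝ
  have hA : ∀ x, A x = lam x • v := fun x => rfl
  let π : (Fin d → ℂ) →L[ℝ] (Fin d → ℂ) := ContinuousLinearMap.id ℝ _ - A
  have hπ : ∀ x, π x = x - lam x • v := fun x => rfl
  let κ : (Fin d → ℂ) → (Fin d → ℂ) := fun x => (χ (l x) : ℝ) • π x + A x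
  have hκ : ContDiff ℝ 3 κ :=
    ((χ.contDiff.comp l.contDiff).smul π.contDiff).add A.contDiff
  let p := fun x => P (κ x)
  -- norms
  have hAn : ∀ x, ‖lam x‖ ≤ 1 → ‖A x‖ < r / 2 := fun x hx => by
    rw [hA, norm_smul]
    calc _ ≤ 1 * ‖v‖ := by gcongr
      _ < _ := by linarith
  have hxn : ∀ x, ‖lam x‖ ≤ 1 → ‖π x‖ ≤ r / 4 → ‖x‖ ≤ 3 * r / 4 := fun x h1 h2 => by
    have : x = π x + A x := by rw [hπ, hA]; abel
    rw [this]
    refine (norm_add_le _ _).trans ?_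
    have := hAn x h1
    linarith
  have hκn : ∀ x, ‖lam x‖ ≤ 1 → ‖π x‖ ≤ r / 4 → ‖κ x‖ ≤ 3 * r / 4 := fun x h1 h2 => by
    refine (norm_add_le _ _).trans ?_
    have := hAn x h1
    rw [norm_smul]
    have : ‖(χ (l x) : ℝ)‖ * ‖π x‖ ≤ 1 * (r / 4) := by gcongr; exact χa _
    linarith
  have hPd : ∀ x ∈ ball (0 : Fin d → ℂ) r, DifferentiableAt ℝ P x := fun x hx =>
    (hP x hx).differentiableAt.restrictScalars ℝ
  have hcd : ∀ x ∈ ball (0 : Fin d → ℂ) r, ContDiffAt ℝ 3 P x := fun x hx =>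
    (hP x hx).contDiffAt.restrict_scalars ℝ
  have hpcd : ∀ x, ‖lam x‖ ≤ 1 → ‖π x‖ ≤ r / 4 → ContDiffAt ℝ 3 p x := fun x h1 h2 => by
    refine ContDiffAt.comp x (hcd _ ?_) hκ.contDiffAt
    have := hκn x h1 h2
    rw [mem_ball_zero_iff]; linarith
  have hsub : closedBall (0 : Fin d → ℂ) (7 * r / 8) ⊆ ball 0 r := closedBall_subset_ball (by linarith)
  obtain ⟨B1, hB1⟩ := (isCompact_closedBall (0 : Fin d → ℂ) (7 * r / 8)).exists_bound_of_continuousOn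
    (f := P) fun x hx => (hPd x (hsub hx)).continuousAt.continuousWithinAt
  obtain ⟨B2, hB2⟩ := (isCompact_closedBall (0 : Fin d → ℂ) (7 * r / 8)).exists_bound_of_continuousOn
    (f := fderiv ℝ P) fun x hx => (((hcd x (hsub hx)).fderiv_right (m := 2) (by norm_num)).continuousAt).continuousWithinAt
  let Kc : Set (Fin d → ℂ) := {x | ‖lam x‖ ≤ 1 ∧ ‖π x‖ ≤ r / 4}
  have hKc : IsCompact Kc := by
    refine (isCompact_closedBall (0 : Fin d → ℂ) (3 * r / 4)).of_isClosed_subset ?_ fun x hx => ?_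
    · exact (isClosed_le lam.continuous.norm continuous_const).inter
        (isClosed_le π.continuous.norm continuous_const)
    · rw [mem_closedBall_zero_iff]; exact hxn x hx.1 hx.2
  obtain ⟨B3, hB3⟩ := hKc.exists_bound_of_continuousOn
    (f := fderiv ℝ p) fun x hx => (((hpcd x hx.1 hx.2).fderiv_right (m := 2) (by norm_num)).continuousAt).continuousWithinAt
  obtain ⟨B4, hB4⟩ := hKc.exists_bound_of_continuousOn
    (f := fderiv ℝ (fderiv ℝ p)) fun x hx => ((((hpcd x hx.1 hx.2).fderiv_right (m := 2) (by norm_num)).fderiv_right (m := 1) (by norm_num)).continuousAt).continuousWithinAt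
  let B := 1 + |B1| + |B2| + |B3| + |B4|
  have g1 : B1 ≤ B := by simp only [B]; linarith [le_abs_self B1, abs_nonneg B2, abs_nonneg B3, abs_nonneg B4]
  have g2 : B2 ≤ B := by simp only [B]; linarith [le_abs_self B2, abs_nonneg B1, abs_nonneg B3, abs_nonneg B4]
  have g3 : B3 ≤ B := by simp only [B]; linarith [le_abs_self B3, abs_nonneg B1, abs_nonneg B2, abs_nonneg B4]
  have g4 : B4 ≤ B := by simp only [B]; linarith [le_abs_self B4, abs_nonneg B1, abs_nonneg B2, abs_nonneg B3]
  have hB : 0 < B := by positivity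
  clear_value B
  have mvt : ∀ x ∈ closedBall (0 : Fin d → ℂ) (7 * r / 8), ∀ y ∈ closedBall (0 : Fin d → ℂ) (7 * r / 8),
      ‖P y - P x‖ ≤ B * ‖y - x‖ := fun x hx y hy =>
    (convex_closedBall (0 : Fin d → ℂ) (7 * r / 8)).norm_image_sub_le_of_norm_fderiv_le (𝕜 := ℝ)
      (fun z hz => hPd z (hsub hz)) (fun z hz => (hB2 z hz).trans g2) hx hy
  -- lower bound
  obtain ⟨c0, hc0, hc0'⟩ : ∃ c0 > 0, ∀ t : ℂ, 1 / 4 ≤ ‖t‖ → ‖t‖ ≤ 1 → c0 ≤ ‖P (t • v)‖ := by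
    have hcpt : IsCompact (closedBall (0 : ℂ) 1 \ ball 0 (1 / 4)) := (isCompact_closedBall _ _).diff isOpen_ball
    have hne : (closedBall (0 : ℂ) 1 \ ball 0 (1 / 4)).Nonempty := ⟨1, by simp; norm_num⟩
    have hct : ContinuousOn (fun t : ℂ => ‖P (t • v)‖) (closedBall (0 : ℂ) 1 \ ball 0 (1 / 4)) := by
      intro t ht
      refine ContinuousAt.continuousWithinAt ?_
      refine ContinuousAt.norm ?_
      have : ContinuousAt P (t • v) := (hPd _ (by
        rw [mem_ball_zero_iff, norm_smul]
        have : ‖t‖ ≤ 1 := by simpa using ht.1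
        calc _ ≤ 1 * ‖v‖ := by gcongr
          _ < _ := by linarith)).continuousAt
      exact ContinuousAt.comp (f := fun t : ℂ => t • v) this (by fun_prop)
    obtain ⟨t0, ht0, hmin⟩ := hcpt.exists_isMinOn hne hct
    refine ⟨‖P (t0 • v)‖, norm_pos_iff.2 (hPv t0 ?_ ?_), fun t h1 h2 => hmin ⟨by simpa using h2, by simpa using h1⟩⟩
    · rintro rfl
      exact ht0.2 (by simp)
    · simpa using ht0.1
  let ε1 := min (1 / 2) (ε / 8)
  have hε1 : 0 < ε1 := by positivity
  have hε1a : ε1 ≤ 1 / 2 := min_le_left _ _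
  have hε1b : ε1 ≤ ε / 8 := min_le_right _ _
  clear_value ε1
  let δ := min (r / 4) (ε1 * (c0 / 2) / B)
  have hδ : 0 < δ := by positivity
  have hδ1 : δ ≤ r / 4 := min_le_left _ _
  have hδ2 : B * δ ≤ ε1 * (c0 / 2) := by
    rw [mul_comm, ← le_div_iff₀ hB]; exact min_le_right _ _
  clear_value δ
  let c1 := min (min (1 / 2) (ε / 8)) (r / 8)
  have hc1 : 0 < c1 := by positivity
  have hc1a : c1 ≤ 1 / 2 := (min_le_left _ _).trans (min_le_left _ _)
  have hc1b : c1 ≤ ε / 8 := (min_le_left _ _).trans (min_le_right _ _)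
  have hc1c : c1 ≤ r / 8 := min_le_right _ _
  clear_value c1
  refine ⟨p, {x | ‖π x‖ < δ}, B, c1 / B, hB, by positivity, isOpen_lt (by fun_prop) continuous_const, ?_, ?_, ?_⟩
  · intro x hx t
    have : π (x + t • v) = π x := by
      rw [hπ, hπ, map_add, map_smul, hlv]; simp [add_smul]
    simpa only [mem_ofPred_eq, this] using hx
  · simpa using hδ
  intro x hx hl
  have hx : ‖π x‖ < δ := hx
  have hx1 : ‖π x‖ ≤ r / 4 := by linarith
  have hxn' := hxn x hl.le hx1
  have hκn' := hκn x hl.le hx1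
  have hxB : x ∈ closedBall (0 : Fin d → ℂ) (7 * r / 8) := by rw [mem_closedBall_zero_iff]; linarith
  have hκB : κ x ∈ closedBall (0 : Fin d → ℂ) (7 * r / 8) := by rw [mem_closedBall_zero_iff]; linarith
  have hPx := (hB1 x hxB).trans g1
  refine ⟨hsub hxB, hPx, (hB2 x hxB).trans g2, (hpcd x hl.le hx1).of_le (by norm_num),
    (hB3 x ⟨hl.le, hx1⟩).trans g3, (hB4 x ⟨hl.le, hx1⟩).trans g4, ?_, ?_⟩
  · intro hl2 w hw
    have hev : p =ᶠ[𝓝 x] fun y => P (A y) := by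
      have : ∀ᶠ y in 𝓝 x, 3 / 8 < ‖lam y‖ :=
        (lam.continuous.norm.continuousAt).eventually (lt_mem_nhds (by linarith))
      filter_upwards [this] with y hy
      simp only [p, κ]
      rw [show l y = lam y from rfl, χ0 _ hy.le]; simp
    have hAx : A x ∈ ball (0 : Fin d → ℂ) r := by
      rw [mem_ball_zero_iff]; linarith [hAn x hl.le]
    have h1 : HasFDerivAt (fun y => P (A y)) ((fderiv ℝ P (A x)).comp A) x :=
      (hPd _ hAx).hasFDerivAt.comp x A.hasFDerivAt
    rw [hev.fderiv_eq, h1.fderiv]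
    simp [hA, hw]
  · intro hPx0
    have hPp := norm_pos_iff.2 hPx0
    have hpP : ‖p x - P x‖ ≤ ε1 * ‖P x‖ := by
      by_cases hs : ‖lam x‖ ≤ 1 / 4
      · have : κ x = x := by
          simp only [κ]
          rw [show l x = lam x from rfl, χ1 _ hs, hπ, hA]; simp
        simp only [p, this, sub_self, norm_zero]; positivity
      · push Not at hs
        have hAB : A x ∈ closedBall (0 : Fin d → ℂ) (7 * r / 8) := by
          rw [mem_closedBall_zero_iff]; linarith [hAn x hl.le]
        have h1 := mvt x hxB (κ x) hκB
        have h2 := mvt x hxB (A x) hAB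
        have e1 : ‖κ x - x‖ ≤ ‖π x‖ := by
          have : κ x - x = -((1 - χ (l x) : ℝ) • π x) := by
            have h0 : A x = x - π x := by rw [hπ, hA]; abel
            simp only [κ]
            rw [sub_smul, one_smul, h0]; abel
          rw [this, norm_neg, norm_smul]
          calc _ ≤ 1 * ‖π x‖ := by gcongr; exact χb _
            _ = _ := one_mul _
        have e2 : ‖A x - x‖ = ‖π x‖ := by rw [norm_sub_rev, hπ, hA]
        have h3 := hc0' (lam x) hs.le hl.le
        have h4 : B * ‖π x‖ ≤ ε1 * (c0 / 2) := (mul_le_mul_of_nonneg_left hx.le hB.le).trans hδ2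
        have h5 : ‖p x - P x‖ ≤ ε1 * (c0 / 2) :=
          h1.trans ((mul_le_mul_of_nonneg_left e1 hB.le).trans h4)
        have h6 : ‖P (A x) - P x‖ ≤ c0 / 2 := by
          rw [e2] at h2
          refine h2.trans (h4.trans ?_)
          nlinarith
        have h7 : c0 / 2 ≤ ‖P x‖ := by
          have := norm_sub_norm_le (P (A x)) (P x)
          rw [← hA] at h3
          linarith
        exact h5.trans (by gcongr)
    have hpx : ‖P x‖ ≤ 2 * ‖p x‖ := by
      have := norm_sub_norm_le (P x) (p x)
      rw [norm_sub_rev] at this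
      nlinarith
    refine ⟨hpx, fun y hy => ?_⟩
    have hy : ‖y - x‖ < c1 / B * ‖P x‖ := by simpa [dist_eq_norm] using hy
    have hy1 : B * ‖y - x‖ ≤ c1 * ‖P x‖ := by
      calc _ ≤ B * (c1 / B * ‖P x‖) := by gcongr
        _ = _ := by field_simp
    have hy2 : ‖y - x‖ ≤ r / 8 := by
      calc _ ≤ c1 / B * B := hy.le.trans (by gcongr)
        _ = c1 := by field_simp
        _ ≤ _ := hc1c
    have hyB : y ∈ closedBall (0 : Fin d → ℂ) (7 * r / 8) := by
      rw [mem_closedBall_zero_iff]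
      have := norm_add_le (y - x) x
      rw [sub_add_cancel] at this
      linarith
    have h1 := (mvt x hxB y hyB).trans hy1
    refine ⟨hsub hyB, h1.trans ?_, ?_⟩
    · nlinarith
    · have h2 : ‖P y - p x‖ ≤ ‖P y - P x‖ + ‖p x - P x‖ := by
        rw [norm_sub_rev (p x)]
        have := norm_add_le (P y - P x) (P x - p x)
        rwa [sub_add_sub_cancel] at this
      have h3 : c1 * ‖P x‖ ≤ ε / 8 * ‖P x‖ := by gcongr
      have h4 : ε1 * ‖P x‖ ≤ ε / 8 * ‖P x‖ := by gcongr
      have h5 : ε * ‖P x‖ ≤ ε * (2 * ‖p x‖) := by gcongr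
      have h6 : 0 < ‖p x‖ := by linarith
      have h7 : 0 < ε * ‖p x‖ := by positivity
      linarith
end RS

namespace RS
open MeasureTheory Metric Topology Filter

def sec (a b : ℝ) : Set ℂ := Complex.exp '' {z | z.im ∈ Ioo a b}

lemma sec_open (a b : ℝ) : IsOpen (sec a b) :=
  Complex.isOpenMap_exp _ (isOpen_Ioo.preimage Complex.continuous_im)

lemma sec_ne {a b : ℝ} {τ : ℂ} (h : τ ∈ sec a b) : τ ≠ 0 := by
  obtain ⟨z, _, rfl⟩ := h
  exact Complex.exp_ne_zero z

lemma sec_smul {a b : ℝ} {c : ℝ} (hc : 0 < c) {τ : ℂ} (h : τ ∈ sec a b) : c • τ ∈ sec a b := by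
  obtain ⟨z, hz, rfl⟩ := h
  refine ⟨(Real.log c : ℝ) + z, by simpa using hz, ?_⟩
  rw [Complex.exp_add, ← Complex.ofReal_exp, Real.exp_log hc, Complex.real_smul]

lemma mem_sec_iff {a b : ℝ} {τ : ℂ} :
    τ ∈ sec a b ↔ τ ≠ 0 ∧ ∃ θ ∈ Ioo a b, τ = (‖τ‖ : ℂ) * Complex.exp (θ * I) := by
  constructor
  · intro h
    refine ⟨sec_ne h, ?_⟩
    obtain ⟨z, hz, rfl⟩ := h
    refine ⟨z.im, hz, ?_⟩
    rw [Complex.norm_exp, Complex.ofReal_exp, ← Complex.exp_add, Complex.re_add_im]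
  · rintro ⟨h0, θ, hθ, h⟩
    refine ⟨(Real.log ‖τ‖ : ℝ) + θ * I, by simpa using hθ, ?_⟩
    rw [Complex.exp_add, ← Complex.ofReal_exp, Real.exp_log (norm_pos_iff.2 h0), ← h]

lemma prod_an {d : ℕ} : AnalyticOnNhd ℂ (fun x : Fin d → ℂ => ∏ i, x i) univ := by
  intro x _
  exact Finset.analyticAt_fun_prod _ fun i _ => (ContinuousLinearMap.proj (R := ℂ) (φ := fun _ : Fin d => ℂ) i).analyticAt x

lemma prod_ne {d : ℕ} (p : Fin d → ℂ) : ¬ ∀ᶠ x : Fin d → ℂ in 𝓝 p, ∏ i, x i = 0 := by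
  intro h
  have := prod_an.eqOn_zero_of_preconnected_of_eventuallyEq_zero isPreconnected_univ (mem_univ p) h
  have := this (mem_univ (fun _ => (1:ℂ)))
  simp at this

lemma P_ne {d : ℕ} {r : ℝ} {P : (Fin d → ℂ) → ℂ} (hP : AnalyticOnNhd ℂ P (ball 0 r))
    (hPne : ∃ x ∈ ball 0 r, P x ≠ 0) : ∀ p ∈ ball (0 : Fin d → ℂ) r, ¬ ∀ᶠ x in 𝓝 p, P x = 0 := by
  intro p hp h
  obtain ⟨x, hx, hx0⟩ := hPne
  exact hx0 (hP.eqOn_zero_of_preconnected_of_eventuallyEq_zero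
    (convex_ball (0 : Fin d → ℂ) r).isPreconnected hp h hx)

lemma cover {d m : ℕ} {r : ℝ} {P : (Fin d → ℂ) → ℂ} (hP : AnalyticOnNhd ℂ P (ball 0 r))
    (hP0 : P 0 = 0) (hPne : ∃ x ∈ ball 0 r, P x ≠ 0) {a b : Fin m → ℝ}
    (hcov : ∀ x ∈ ball (0 : Fin d → ℂ) r, P x ≠ 0 → (∀ i, x i ≠ 0) → ∃ j, P x ∈ sec (a j) (b j)) :
    ∀ τ : ℂ, τ ≠ 0 → ∃ j, τ ∈ sec (a j) (b j) := by
  obtain ⟨x1, hx1, hx10⟩ := hPne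
  obtain ⟨x0, ⟨hx0, hPx0⟩, hx0q⟩ : ∃ x0, (x0 ∈ ball (0 : Fin d → ℂ) r ∧ P x0 ≠ 0) ∧ ∏ i, x0 i ≠ 0 := by
    have h1 : ∀ᶠ x in 𝓝 x1, x ∈ ball (0 : Fin d → ℂ) r ∧ P x ≠ 0 :=
      (isOpen_ball.eventually_mem hx1).and ((hP x1 hx1).continuousAt.eventually_ne hx10)
    have h2 : ∃ᶠ x in 𝓝 x1, ∏ i, x i ≠ 0 := not_eventually.1 (prod_ne x1)
    obtain ⟨x, h⟩ := (h2.and_eventually h1).exists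
    exact ⟨x, h.2, h.1⟩
  have hr : 0 < r := pos_of_mem_ball hx0
  have hq : ∀ i, x0 i ≠ 0 := fun i => Finset.prod_ne_zero_iff.1 hx0q i (Finset.mem_univ i)
  let h : ℂ → ℂ := fun t => P (t • x0)
  have hh : AnalyticAt ℂ h 0 := by
    have h1 : AnalyticAt ℂ P ((0:ℂ) • x0) := hP _ (by simpa using hr)
    exact h1.comp (f := fun t : ℂ => t • x0) (analyticAt_id.smul analyticAt_const)
  have h00 : h 0 = 0 := by simp [h, hP0]
  rcases hh.eventually_constant_or_nhds_le_map_nhds with h1 | h1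
  · exfalso
    have h2 := line_nonzero hP hx0 hPx0
    obtain ⟨t, ht⟩ := (h2.and (h1.filter_mono nhdsWithin_le_nhds)).exists
    rw [h00] at ht
    simp only [zero_add, sub_zero] at ht
    exact ht.1 ht.2
  · rw [h00] at h1
    have h2 : {t : ℂ | t • x0 ∈ ball (0 : Fin d → ℂ) r} ∈ 𝓝 (0:ℂ) := by
      have : Continuous fun t : ℂ => t • x0 := by fun_prop
      exact (isOpen_ball.preimage this).mem_nhds (by simpa using hr)
    have h3 := h1 (image_mem_map h2)
    obtain ⟨η, hη, h4⟩ := Metric.mem_nhds_iff.1 h3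
    intro τ hτ
    have hτ' := norm_pos_iff.2 hτ
    have hc : 0 < η / 2 / ‖τ‖ := by positivity
    obtain ⟨t, ht, hht⟩ := h4 (show (η / 2 / ‖τ‖ : ℝ) • τ ∈ ball (0:ℂ) η by
      rw [mem_ball_zero_iff, norm_smul, Real.norm_eq_abs, abs_of_pos hc]
      field_simp; linarith)
    have hne : h t ≠ 0 := by rw [hht]; exact smul_ne_zero hc.ne' hτ
    have ht0 : t ≠ 0 := by rintro rfl; exact hne h00
    obtain ⟨j, hj⟩ := hcov (t • x0) ht hne (fun i => by simpa using ⟨ht0, hq i⟩)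
    refine ⟨j, ?_⟩
    have h5 := sec_smul (inv_pos.2 hc) hj
    rw [show P (t • x0) = h t from rfl, hht, smul_smul, inv_mul_cancel₀ hc.ne', one_smul] at h5
    exact h5

lemma prep {d m : ℕ} {r s γ C : ℝ} {P : (Fin d → ℂ) → ℂ} (hP : AnalyticOnNhd ℂ P (ball 0 r))
    {a b : Fin m → ℝ} {f : Fin m → (Fin d → ℂ) → ℂ}
    (hfA : ∀ j, ∀ x ∈ ball 0 r, P x ∈ sec (a j) (b j) → (∀ i, x i ≠ 0) → AnalyticAt ℂ (f j) x)
    {M : ℝ} (hfB : ∀ j, ∀ x ∈ ball 0 r, P x ∈ sec (a j) (b j) → (∀ i, x i ≠ 0) → ‖f j x‖ ≤ M)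
    (hdiff : ∀ j k, ∀ x ∈ ball 0 r, P x ∈ sec (a j) (b j) → P x ∈ sec (a k) (b k) → (∀ i, x i ≠ 0) →
      ‖f j x - f k x‖ ≤ C * Real.exp (-γ / ‖P x‖ ^ (1 / s))) :
    ∃ F : Fin m → (Fin d → ℂ) → ℂ,
      (∀ j, ∀ x ∈ ball 0 r, P x ∈ sec (a j) (b j) → AnalyticAt ℂ (F j) x) ∧
      (∀ j, ∀ x ∈ ball 0 r, P x ∈ sec (a j) (b j) → ‖F j x‖ ≤ M) ∧
      (∀ j, ∀ x ∈ ball 0 r, P x ∈ sec (a j) (b j) → (∀ i, x i ≠ 0) → F j x = f j x) ∧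
      (∀ j k, ∀ x ∈ ball 0 r, P x ∈ sec (a j) (b j) → P x ∈ sec (a k) (b k) →
        ‖F j x - F k x‖ ≤ C * Real.exp (-γ / ‖P x‖ ^ (1 / s))) := by
  let S : Fin m → Set (Fin d → ℂ) := fun j => ball 0 r ∩ P ⁻¹' sec (a j) (b j)
  have hS : ∀ j, IsOpen (S j) := fun j => by
    have : ContinuousOn P (ball 0 r) := fun x hx => (hP x hx).continuousAt.continuousWithinAt
    exact this.isOpen_inter_preimage isOpen_ball (sec_open _ _)
  have hq : ∀ x : Fin d → ℂ, ∏ i, x i ≠ 0 → ∀ i, x i ≠ 0 := fun x hx i =>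
    Finset.prod_ne_zero_iff.1 hx i (Finset.mem_univ i)
  have hq' : ∀ x : Fin d → ℂ, (∀ i, x i ≠ 0) → ∏ i, x i ≠ 0 := fun x hx =>
    Finset.prod_ne_zero_iff.2 fun i _ => hx i
  have hext := fun j => riemann_ext (hS j) (prod_an.mono (subset_univ _)) (fun p _ => prod_ne p)
    (f := f j) (fun x hx => hfA j x hx.1.1 hx.1.2 (hq x hx.2)) M
    (fun x hx hx2 => hfB j x hx.1 hx.2 (hq x hx2))
  choose F h1 h2 h3 using hext
  refine ⟨F, fun j x hx hs => h1 j x ⟨hx, hs⟩, fun j x hx hs => h3 j x ⟨hx, hs⟩,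
    fun j x hx hs hi => h2 j x ⟨hx, hs⟩ (hq' x hi), fun j k x hx hj hk => ?_⟩
  by_contra! hlt
  have c1 : ContinuousAt (fun x => ‖F j x - F k x‖) x :=
    ((h1 j x ⟨hx, hj⟩).continuousAt.sub (h1 k x ⟨hx, hk⟩).continuousAt).norm
  have hP0 : ‖P x‖ ≠ 0 := norm_ne_zero_iff.2 (sec_ne hj)
  have c2 : ContinuousAt (fun x => C * Real.exp (-γ / ‖P x‖ ^ (1 / s))) x := by
    have c3 : ContinuousAt (fun x => ‖P x‖ ^ (1 / s)) x :=
      (hP x hx).continuousAt.norm.rpow_const (Or.inl hP0)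
    have : ‖P x‖ ^ (1 / s) ≠ 0 := (Real.rpow_pos_of_pos (norm_pos_iff.2 (sec_ne hj)) _).ne'
    exact continuousAt_const.mul ((continuousAt_const.div c3 this).rexp)
  have e1 : ∀ᶠ y in 𝓝 x, C * Real.exp (-γ / ‖P y‖ ^ (1 / s)) < ‖F j y - F k y‖ := c2.eventually_lt c1 hlt
  have e2 := ((hS j).eventually_mem ⟨hx, hj⟩).and ((hS k).eventually_mem ⟨hx, hk⟩)
  have e3 : ∃ᶠ x in 𝓝 x, ∏ i, x i ≠ 0 := not_eventually.1 (prod_ne x)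
  obtain ⟨y, hy1, hy2, hy3, hy4⟩ := (e3.and_eventually (e1.and e2)).exists
  have := hdiff j k y hy3.1 hy3.2 hy4.2 (hq y hy1)
  rw [h2 j y hy3 hy1, h2 k y hy4 hy1] at hy2
  linarith
end RS

/-- **Ramis–Sibuya theorem for asymptotics with respect to a germ** (Theorem 7.17).
If `P`-sectors `Π_j` cover `{x ∈ D(0;r) : P(x) ≠ 0, all x_i ≠ 0}`, the `f_j` are bounded
holomorphic on `Π_j`, and the pairwise differences are exponentially small of order `1/s`
in `|P|`, then the `f_j` have a common `P`-`s`-Gevrey asymptotic expansion. -/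
theorem ramis_sibuya_for_germ_asymptotics
    (d : ℕ) (hd : 1 ≤ d) (s : ℝ) (hs : 0 < s) (r : ℝ) (hr : 0 < r)
    (P : (Fin d → ℂ) → ℂ) (hP : AnalyticOnNhd ℂ P (polydisk d r))
    (hP0 : P 0 = 0) (hPne : ∃ x ∈ polydisk d r, P x ≠ 0)
    (m : ℕ) (hm : 1 ≤ m) (a b : Fin m → ℝ)
    (hab : ∀ j, a j < b j) (h2π : ∀ j, b j ≤ a j + 2 * Real.pi)
    (hcover : {x ∈ polydisk d r | P x ≠ 0 ∧ ∀ i, x i ≠ 0} ⊆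
      ⋃ j, PSector d P (a j) (b j) r)
    (f : Fin m → (Fin d → ℂ) → ℂ)
    (hfA : ∀ j, AnalyticOnNhd ℂ (f j) (PSector d P (a j) (b j) r))
    (hfB : ∀ j, ∃ M, ∀ x ∈ PSector d P (a j) (b j) r, ‖f j x‖ ≤ M)
    (γ C : ℝ) (hγ : 0 < γ) (hC : 0 < C)
    (hdiff : ∀ j₁ j₂ : Fin m,
      ∀ x ∈ PSector d P (a j₁) (b j₁) r ∩ PSector d P (a j₂) (b j₂) r,
      ‖f j₁ x - f j₂ x‖ ≤
        C * Real.exp (-γ / ‖P x‖ ^ (1 / s))) :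
    ∃ ρ > 0, ρ ≤ r ∧ ∃ g : ℕ → (Fin d → ℂ) → ℂ, ∃ K A : ℝ, 0 < K ∧ 0 < A ∧
      (∀ n, AnalyticOnNhd ℂ (g n) (polydisk d ρ)) ∧
      (∀ n : ℕ, ∀ x ∈ polydisk d ρ,
        ‖g n x‖ ≤ K * A ^ n * Real.Gamma (s * n + 1)) ∧
      ∀ j : Fin m, ∀ N : ℕ, ∀ x ∈ PSector d P (a j) (b j) r ∩ polydisk d ρ,
        ‖f j x - ∑ n ∈ Finset.range N, g n x * P x ^ n‖ ≤
          K * A ^ N * Real.Gamma (s * N + 1) * ‖P x‖ ^ N := by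
  have hpd : ∀ ρ : ℝ, 0 < ρ → polydisk d ρ = Metric.ball 0 ρ := fun ρ hρ => by
    ext x
    rw [mem_ball_zero_iff, pi_norm_lt_iff hρ]
    rfl
  have hsecmem : ∀ j x, x ∈ PSector d P (a j) (b j) r ↔
      x ∈ Metric.ball (0 : Fin d → ℂ) r ∧ P x ∈ RS.sec (a j) (b j) ∧ ∀ i, x i ≠ 0 := by
    intro j x
    rw [← hpd r hr, RS.mem_sec_iff]
    constructor
    · rintro ⟨h1, h2, h3⟩
      exact ⟨fun i => (h1 i).2, ⟨h2, h3⟩, fun i => norm_pos_iff.1 (h1 i).1⟩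
    · rintro ⟨h1, ⟨h2, h3⟩, h4⟩
      exact ⟨fun i => ⟨norm_pos_iff.2 (h4 i), h1 i⟩, h2, h3⟩
  rw [hpd r hr] at hP hPne hcover
  have hcov := RS.cover hP hP0 hPne (a := a) (b := b) (fun x hx hx0 hi => by
    obtain ⟨j, hj⟩ := mem_iUnion.1 (hcover ⟨hx, hx0, hi⟩)
    exact ⟨j, ((hsecmem j x).1 hj).2.1⟩)
  choose M' hM' using hfB
  let M := ∑ j, |M' j|
  have hM0 : 0 ≤ M := Finset.sum_nonneg fun j _ => abs_nonneg _
  have hM1 : ∀ j, M' j ≤ M := fun j => (le_abs_self _).trans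
    (Finset.single_le_sum (f := fun j => |M' j|) (fun j _ => abs_nonneg _) (Finset.mem_univ j))
  obtain ⟨F, hF1, hF2, hF3, hF4⟩ := RS.prep (f := f) (M := M) (s := s) (γ := γ) (C := C) hP
    (fun j x hx hs hi => hfA j x ((hsecmem j x).2 ⟨hx, hs, hi⟩))
    (fun j x hx hs hi => (hM' j x ((hsecmem j x).2 ⟨hx, hs, hi⟩)).trans (hM1 j))
    (fun j k x hx hs hs' hi => hdiff j k x ⟨(hsecmem j x).2 ⟨hx, hs, hi⟩, (hsecmem k x).2 ⟨hx, hs', hi⟩⟩)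
  obtain ⟨φ, ε, hε, D, hD, hφd, hφ1, hφs, hφa, hφD⟩ := RS.angular (fun j => RS.sec_open (a j) (b j))
    (fun j c hc τ hτ => RS.sec_smul hc hτ) hcov
  have hPnz := RS.P_ne hP hPne
  obtain ⟨v, lam, hv, hlv, hPv⟩ : ∃ (v : Fin d → ℂ) (lam : (Fin d → ℂ) →L[ℂ] ℂ), ‖v‖ < r / 2 ∧
      lam v = 1 ∧ ∀ t : ℂ, t ≠ 0 → ‖t‖ ≤ 1 → P (t • v) ≠ 0 := by
    obtain ⟨x1, hx1, hx10⟩ := hPne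
    have h1 := RS.line_nonzero hP hx1 hx10
    simp only [zero_add, sub_zero] at h1
    rw [eventually_nhdsWithin_iff] at h1
    obtain ⟨η, hη, h2⟩ := Metric.eventually_nhds_iff.1 h1
    let e : ℝ := min η 1 / 2
    have he : 0 < e := by positivity
    have he1 : e ≤ 1 / 2 := by simp only [e]; linarith [min_le_right η 1]
    have he2 : e < η := by simp only [e]; linarith [min_le_left η 1]
    clear_value e
    have hx1n : x1 ≠ 0 := by rintro rfl; exact hx10 hP0
    obtain ⟨i, hi⟩ := Function.ne_iff.1 hx1n
    have hi : x1 i ≠ 0 := hi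
    have hec : (e : ℂ) ≠ 0 := by exact_mod_cast he.ne'
    have hen : ‖(e : ℂ)‖ = e := by rw [Complex.norm_real, Real.norm_eq_abs, abs_of_pos he]
    have hvi : ((e : ℂ) • x1) i ≠ 0 := by simpa using ⟨he.ne', hi⟩
    refine ⟨(e : ℂ) • x1, ((((e : ℂ) • x1) i)⁻¹) • ContinuousLinearMap.proj (R := ℂ) (φ := fun _ : Fin d => ℂ) i, ?_, ?_, ?_⟩
    · rw [norm_smul, hen]
      have : ‖x1‖ < r := by simpa using hx1
      nlinarith [norm_nonneg x1]
    · rw [ContinuousLinearMap.smul_apply, ContinuousLinearMap.proj_apply, smul_eq_mul]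
      exact inv_mul_cancel₀ hvi
    · intro t ht0 ht1
      rw [smul_smul]
      refine h2 ?_ (mul_ne_zero ht0 hec)
      rw [dist_zero_right, norm_mul, hen]
      nlinarith
  obtain ⟨p, T, B, c, hB, hc, hT, hTv, h0T, hG⟩ := RS.geom hr hP v hv lam hlv hPv hε
  let X : RS.Setup (Fin d → ℂ) m :=
    { P := P, p := p, Ω := T ∩ {x | ‖lam x‖ < 1},
      S := fun j => Metric.ball 0 r ∩ P ⁻¹' RS.sec (a j) (b j), φ := φ, f := F
      B := B, c := c, D := D, C := C, γ := γ, s := s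
      hΩ := hT.inter (isOpen_lt lam.continuous.norm continuous_const)
      hB := hB, hc := hc, hD := hD, hC := hC.le, hγ := hγ, hs := hs
      hPc := fun x hx => (hP x (hG x hx.1 hx.2).1).continuousAt
      hPB := fun x hx => (hG x hx.1 hx.2).2.1
      hp2 := fun x hx => (hG x hx.1 hx.2).2.2.2.1
      hpB1 := fun x hx => (hG x hx.1 hx.2).2.2.2.2.1
      hpB2 := fun x hx => (hG x hx.1 hx.2).2.2.2.2.2.1
      hpP := fun x hx h0 => ((hG x hx.1 hx.2).2.2.2.2.2.2.2 h0).1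
      hφd := hφd, hφ1 := hφ1, hφs := hφs
      hφD1 := hφD.1
      hφD2 := hφD.2
      hact := fun x hx h0 j => by
        have h1 := (hG x hx.1 hx.2).2.2.2.2.2.2.2 h0
        have hp0 : p x ≠ 0 := fun h => by
          have h3 := h1.1
          rw [h, norm_zero, mul_zero] at h3
          exact h0 (norm_le_zero_iff.1 h3)
        refine (hφa j (p x) hp0).imp id fun h2 y hy => ?_
        obtain ⟨q1, q2, q3⟩ := h1.2 y hy
        exact ⟨q1, h2 (by rw [Metric.mem_ball, dist_eq_norm]; exact q3)⟩
      hS2 := fun x hx h0 y hy => by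
        obtain ⟨q1, q2, q3⟩ := ((hG x hx.1 hx.2).2.2.2.2.2.2.2 h0).2 y hy
        have hp := norm_pos_iff.2 h0
        constructor
        · intro h
          rw [h, zero_sub, norm_neg] at q2
          linarith
        · have := norm_sub_norm_le (P y) (P x)
          linarith
      hfA := fun j x hx => hF1 j x hx.1 hx.2
      hfC := fun i j x hx _ => hF4 i j x hx.1.1 hx.1.2 hx.2.2 }
  obtain ⟨ρ0, hρ0, hρs⟩ := Metric.isOpen_iff.1
    (hT.inter (isOpen_lt lam.continuous.norm (continuous_const (y := (1 / 2 : ℝ))))) 0 ⟨h0T, by simp⟩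
  have hρ : 0 < min ρ0 r := lt_min hρ0 hr
  have hsubr : Metric.ball (0 : Fin d → ℂ) (min ρ0 r) ⊆ Metric.ball 0 r :=
    Metric.ball_subset_ball (min_le_right _ _)
  obtain ⟨g, K, A, hK, hA, hg1, hg2, hg3⟩ := RS.concl X v lam hlv hT hTv (fun x h1 h2 => ⟨h1, h2⟩)
    (fun x hx => hP x (hG x hx.1 hx.2).1) (fun x hx => (hG x hx.1 hx.2).2.2.1)
    (fun x hx hl _ => (hG x hx.1 hx.2).2.2.2.2.2.2.1 hl)
    (U := Metric.ball 0 (min ρ0 r)) Metric.isOpen_ball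
    (fun x hx => hρs (Metric.ball_subset_ball (min_le_left _ _) hx))
    (fun q hq => hPnz q (hsubr hq)) hM0 (fun j y hy => hF2 j y hy.1 hy.2)
  refine ⟨min ρ0 r, hρ, min_le_right _ _, g, K, A, hK, hA, ?_⟩
  rw [hpd _ hρ]
  refine ⟨hg1, hg2, fun j N x hx => ?_⟩
  obtain ⟨h1, h2, h3⟩ := (hsecmem j x).1 hx.1
  have h4 := hg3 j N x hx.2 (RS.sec_ne h2) ⟨h1, h2⟩
  have h5 : X.f j x = f j x := hF3 j x h1 h2 h3
  rw [h5] at h4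
  exact h4
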